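/- The range of the function ξ ↦ w_2(ξ) − w_2*(ξ) is exactly the closed interval [0,1]; that is, for every ξ ∈ F_q((T^{-1})) with w_2(ξ) finite one has 0 ≤ w_2(ξ) − w_2*(ξ) ≤ 1, and conversely for every real δ ∈ [0,1] there exists ξ ∈ F_q((T^{-1})) with w_2(ξ) and w_2*(ξ) finite and w_2(ξ) − w_2*(ξ) = δ. -/

import Mathlib

open Polynomial Filter
open scoped ENNReal

noncomputable section

namespace Ooto

variable (Fq : Type) [Field Fq] [Fintype Fq]

/-- `F_q((T⁻¹))`, realized as formal Laurent series in the variable `X = T⁻¹`. -/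
abbrev K := LaurentSeries Fq

/-- The element `T = X⁻¹` of `F_q((T⁻¹))`. -/
def TT : K Fq := HahnSeries.single (-1 : ℤ) (1 : Fq)

/-- The natural embedding of `F_q[T]` into `F_q((T⁻¹))`, sending `T` to `T`. -/
def polyToK : Polynomial Fq →+* K Fq := Polynomial.eval₂RingHom HahnSeries.C (TT Fq)

open Classical in
/-- The absolute value on `F_q((T⁻¹))`: `|0| = 0` and `|ξ| = q^{-N}` where `N` is the order
of `ξ` as a series in `T⁻¹`. -/
def kabs (f : K Fq) : ℝ := if f = 0 then 0 else (Fintype.card Fq : ℝ) ^ (-f.order)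

/-- A fixed algebraic closure of `F_q((T⁻¹))`. -/
abbrev L := AlgebraicClosure (K Fq)

def toL : K Fq →+* L Fq := algebraMap (K Fq) (L Fq)

def φ : Polynomial Fq →+* L Fq := (toL Fq).comp (polyToK Fq)

/-- Evaluation of `P ∈ (F_q[T])[X]` at `ξ ∈ F_q((T⁻¹))`. -/
def evalK (P : Polynomial (Polynomial Fq)) (ξ : K Fq) : K Fq :=
  Polynomial.eval₂ (polyToK Fq) ξ P

/-- Evaluation of `P ∈ (F_q[T])[X]` at a point of the algebraic closure. -/
def evalL (P : Polynomial (Polynomial Fq)) (α : L Fq) : L Fq :=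
  Polynomial.eval₂ (φ Fq) α P

/-- Height of a polynomial over `F_q[T]`: the maximum of the absolute values of its
coefficients. -/
def Hpoly (P : Polynomial (Polynomial Fq)) : ℝ := ⨆ i : ℕ, kabs Fq (polyToK Fq (P.coeff i))

/-- `P` is the minimal polynomial of `α`: a non-constant irreducible primitive polynomial in
`(F_q[T])[X]` whose leading coefficient is monic in `T`, vanishing at `α`. -/
def IsMinPolyOf (P : Polynomial (Polynomial Fq)) (α : L Fq) : Prop :=
  0 < P.natDegree ∧ Irreducible P ∧ P.IsPrimitive ∧ (P.leadingCoeff).Monic ∧ evalL Fq P α = 0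

/-- `α` is algebraic over `F_q(T)`. -/
def IsAlgElem (α : L Fq) : Prop := ∃ P, IsMinPolyOf Fq P α

open Classical in
/-- The minimal polynomial of an algebraic element (junk value `0` otherwise). -/
def minPolyPrim (α : L Fq) : Polynomial (Polynomial Fq) :=
  if h : IsAlgElem Fq α then h.choose else 0

/-- Degree of an algebraic element. -/
def degAlg (α : L Fq) : ℕ := (minPolyPrim Fq α).natDegree

/-- Height of an algebraic element. -/
def heightAlg (α : L Fq) : ℝ := Hpoly Fq (minPolyPrim Fq α)

/-- Inseparable degree of a polynomial `P ∈ (F_q[T])[X]`: the largest power `f = p^j` of the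
characteristic such that `P(X) = R(X^f)` for some `R`. -/
def insepDeg (P : Polynomial (Polynomial Fq)) : ℕ :=
  (ringChar Fq) ^ sSup {j : ℕ | ∃ R : Polynomial (Polynomial Fq),
    P = R.comp (Polynomial.X ^ (ringChar Fq) ^ j)}

/-- Inseparable degree of an algebraic element. -/
def insepAlg (α : L Fq) : ℕ := insepDeg Fq (minPolyPrim Fq α)

/-- `α'` is the Galois conjugate of the quadratic element `α` (equal to `α` itself in the
inseparable case): the minimal polynomial of `α` factors as `A(X - α)(X - α')`. -/
def IsConjOf (α' α : L Fq) : Prop :=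
  (minPolyPrim Fq α).natDegree = 2 ∧
  (minPolyPrim Fq α).map (φ Fq) =
    Polynomial.C (φ Fq (minPolyPrim Fq α).leadingCoeff) *
      (Polynomial.X - Polynomial.C α) * (Polynomial.X - Polynomial.C α')

/-- `v` is an absolute value on the algebraic closure of `F_q((T⁻¹))` extending `kabs`
(such an extension exists and is unique). -/
structure IsAbsExt (v : L Fq → ℝ) : Prop where
  eq_zero_iff : ∀ x, v x = 0 ↔ x = 0
  map_mul : ∀ x y, v (x * y) = v x * v y
  add_le : ∀ x y, v (x + y) ≤ max (v x) (v y)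
  nonneg : ∀ x, 0 ≤ v x
  extends_kabs : ∀ f : K Fq, v (toL Fq f) = kabs Fq f

/-- The exponent `w_n(ξ)`: the supremum of the real numbers `w` such that
`0 < |P(ξ)| ≤ H(P)^{-w}` for infinitely many `P ∈ (F_q[T])[X]` of degree at most `n`. -/
def wExp (n : ℕ) (ξ : K Fq) : EReal :=
  sSup {x : EReal | ∃ w : ℝ, x = (w : EReal) ∧
    {P : Polynomial (Polynomial Fq) | P.natDegree ≤ n ∧ 0 < kabs Fq (evalK Fq P ξ) ∧
      kabs Fq (evalK Fq P ξ) ≤ Hpoly Fq P ^ (-w)}.Infinite}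

/-- The exponent `w_n^*(ξ)`: the supremum of the real numbers `w` such that
`0 < |ξ - α| ≤ H(α)^{-w-1}` for infinitely many algebraic `α` of degree at most `n`. -/
def wStarExp (v : L Fq → ℝ) (n : ℕ) (ξ : K Fq) : EReal :=
  sSup {x : EReal | ∃ w : ℝ, x = (w : EReal) ∧
    {α : L Fq | IsAlgElem Fq α ∧ degAlg Fq α ≤ n ∧ 0 < v (toL Fq ξ - α) ∧
      v (toL Fq ξ - α) ≤ heightAlg Fq α ^ (-w - 1)}.Infinite}

/-- `pSeq a n = p_{n-1}`, the numerators of the convergents of `[a 0; a 1, a 2, …]`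
(with `p_{-1} = 1`). -/
def pSeq (a : ℕ → Polynomial Fq) : ℕ → Polynomial Fq
  | 0 => 1
  | 1 => a 0
  | (n+2) => a (n+1) * pSeq a (n+1) + pSeq a n

/-- `qSeq a n = q_{n-1}`, the denominators of the convergents of `[a 0; a 1, a 2, …]`
(with `q_{-1} = 0`). -/
def qSeq (a : ℕ → Polynomial Fq) : ℕ → Polynomial Fq
  | 0 => 0
  | 1 => 1
  | (n+2) => a (n+1) * qSeq a (n+1) + qSeq a n

/-- `ξ` has continued fraction expansion `[a 0; a 1, a 2, …]`: each partial quotient `a n`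
(`n ≥ 1`) has degree at least one and `|ξ - p_n/q_n| = |q_n|⁻¹|q_{n+1}|⁻¹` for all `n ≥ 0`. -/
def IsCFOf (ξ : K Fq) (a : ℕ → Polynomial Fq) : Prop :=
  (∀ n, 1 ≤ n → 1 ≤ (a n).natDegree) ∧
  ∀ n : ℕ,
    kabs Fq (ξ - polyToK Fq (pSeq Fq a (n+1)) / polyToK Fq (qSeq Fq a (n+1))) =
      (kabs Fq (polyToK Fq (qSeq Fq a (n+1))) * kabs Fq (polyToK Fq (qSeq Fq a (n+2))))⁻¹

/-- The sequence of partial quotients of `[0; b 0, b 1, b 2, …]`. -/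
def cfA (b : ℕ → Polynomial Fq) : ℕ → Polynomial Fq := fun n => if n = 0 then 0 else b (n - 1)

/-- `qden b n` is the denominator `q_n` of the `n`-th convergent of `[0; b 0, b 1, …]`. -/
def qden (b : ℕ → Polynomial Fq) (n : ℕ) : Polynomial Fq := qSeq Fq (cfA Fq b) (n + 1)

/-- `V^w` for a finite word `V` and a real `w ≥ 0`: `⌊w⌋` copies of `V` followed by the prefix
of `V` of length `⌈(w - ⌊w⌋)|V|⌉`. -/
def wordPow {A : Type*} (V : List A) (w : ℝ) : List A :=
  (List.replicate ⌊w⌋₊ V).flatten ++ V.take ⌈(w - ⌊w⌋₊) * V.length⌉₊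

/-- The finite word `l` is a prefix of the infinite word `b`. -/
def IsPrefixOfSeq {A : Type*} (l : List A) (b : ℕ → A) : Prop :=
  ∀ (i : ℕ) (h : i < l.length), l.get ⟨i, h⟩ = b i

/-- Condition `(*)_ρ` for an infinite word. -/
def SatisfiesCond {A : Type*} (b : ℕ → A) (ρ : ℝ) : Prop :=
  ∃ (U V : ℕ → List A) (w : ℕ → ℝ),
    (∀ n, V n ≠ []) ∧ (∀ n, 0 ≤ w n) ∧
    (∀ n, IsPrefixOfSeq (U n ++ wordPow (V n) (w n)) b) ∧
    (∀ n, ρ * (((U n).length + (V n).length : ℕ) : ℝ) ≤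
      (((U n).length + (wordPow (V n) (w n)).length : ℕ) : ℝ)) ∧
    StrictMono fun n => (wordPow (V n) (w n)).length

/-- The Diophantine exponent of an infinite word: the supremum of the `ρ` such that the word
satisfies Condition `(*)_ρ`. -/
def dioExp {A : Type*} (b : ℕ → A) : EReal :=
  sSup {x : EReal | ∃ ρ : ℝ, x = (ρ : EReal) ∧ SatisfiesCond b ρ}

/-- The complexity function: the number of distinct blocks of `n` consecutive letters. -/
def complexity {A : Type*} (b : ℕ → A) (n : ℕ) : ℕ∞ :=
  {w : Fin n → A | ∃ i : ℕ, ∀ k : Fin n, w k = b (i + k)}.encard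

/-- The infinite word `b` is ultimately periodic. -/
def UltimatelyPeriodic {A : Type*} (b : ℕ → A) : Prop :=
  ∃ N T : ℕ, 0 < T ∧ ∀ n, N ≤ n → b (n + T) = b n

/-!
Let `α` be the root of `P` nearest to `ξ`. Then `|P(ξ)|` is at most `O(H(P)) |ξ - α|`, and for
linear and separable quadratic `P` it is at least `|ξ - α|`: this gives `w₂* ≤ w₂ ≤ w₂* + 1`, up to
inseparable quadratics. Those exist only in characteristic two, where they are `R² + T S²` with `R`
and `S` linear; the two terms cannot cancel, so that `|P(ξ)|` is bounded below through `|R(ξ)|` and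
`|S(ξ)|`.

To realize a difference `0 < δ ≤ 1`, take a continued fraction made of longer and longer constant
blocks. Repeating a block forever gives a quadratic element, whose minimal polynomial `P` is very
small at `ξ`; the degrees of the partial quotients are chosen so that
`|P'(ξ)| = H(P)^{1 - δ + o(1)}`. As `|ξ - α| = |P(ξ)| / |P'(ξ)|`, these `P` contribute to the two
exponents values that differ by `δ`. Two coprime polynomials cannot both be very small at `ξ`,
because their resultant is a nonzero polynomial in `T`; hence no other polynomials matter.
-/

section RealEstimates

lemma nonpos_of_eventually_mul_rpow_le {a b c B : ℝ} (hb : 1 < b) (hc : 0 < c)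
    (h : ∀ᶠ m : ℕ in atTop, c * (b ^ m) ^ a ≤ B) : a ≤ 0 := by
  by_contra! ha
  have hlim := (tendsto_pow_atTop_atTop_of_one_lt (Real.one_lt_rpow hb ha)).const_mul_atTop hc
  obtain ⟨m, hm, hmB⟩ := (h.and (hlim.eventually_gt_atTop B)).exists
  rw [Real.rpow_pow_comm (one_pos.trans hb).le] at hmB
  exact hmB.not_ge hm

variable {ι : Type*} {S : Set ι} {H f : ι → ℝ} {s : ℝ}

lemma finite_le_rpow_neg (hH : ∀ i ∈ S, 1 ≤ H i) (hfin : ∀ B, {i ∈ S | H i ≤ B}.Finite)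
    {c w : ℝ} (hc : 0 < c) (hf : ∀ i ∈ S, c * H i ^ (-s) ≤ f i) (hsw : s < w) :
    {i ∈ S | f i ≤ H i ^ (-w)}.Finite := by
  refine (hfin (c⁻¹ ^ (w - s)⁻¹)).subset fun i ⟨hi, hfi⟩ => ⟨hi, ?_⟩
  have hH0 : 0 < H i := one_pos.trans_le (hH i hi)
  rw [Real.le_rpow_inv_iff_of_pos hH0.le (by positivity) (sub_pos.2 hsw), le_inv_comm₀
    (by positivity) hc, ← Real.rpow_neg hH0.le, neg_sub, sub_eq_add_neg, Real.rpow_add hH0]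
  have h : c * H i ^ (-s) * H i ^ s ≤ H i ^ (-w) * H i ^ s := by
    gcongr
    exact (hf i hi).trans hfi
  rwa [mul_assoc, ← Real.rpow_add hH0, neg_add_cancel, Real.rpow_zero, mul_one, mul_comm] at h

lemma exists_mul_rpow_neg_le (hf : ∀ i ∈ S, 0 < f i)
    (hfin : {i ∈ S | f i ≤ H i ^ (-s)}.Finite) :
    ∃ c : ℝ, 0 < c ∧ ∀ i ∈ S, c * H i ^ (-s) ≤ f i := by
  obtain ⟨C, hC⟩ := (hfin.image fun i => H i ^ (-s) / f i).bddAbove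
  have hC1 : 0 < max C 1 := one_pos.trans_le (le_max_right _ _)
  refine ⟨(max C 1)⁻¹, inv_pos.2 hC1, fun i hi => (inv_mul_le_iff₀ hC1).2 ?_⟩
  by_cases hfi : f i ≤ H i ^ (-s)
  · have hle : H i ^ (-s) / f i ≤ C := hC ⟨i, ⟨hi, hfi⟩, rfl⟩
    exact (div_le_iff₀ (hf i hi)).1 (hle.trans (le_max_left _ _))
  · exact (not_le.1 hfi).le.trans (le_mul_of_one_le_left (hf i hi).le (le_max_right _ _))

end RealEstimates

section Nonarchimedean

variable {A : Type*} [CommRing A] [IsDomain A] {v : AbsoluteValue A ℝ} {x y : A} {M : ℝ}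

lemma abv_pow_sub_pow_le (hv : IsNonarchimedean v) (hM : 1 ≤ M) (hx : v x ≤ M) (hy : v y ≤ M)
    (n : ℕ) : v (x ^ n - y ^ n) ≤ v (x - y) * M ^ n := by
  have := v.nonneg (x - y)
  induction n with
  | zero => simp
  | succ n ih =>
    rw [show x ^ (n + 1) - y ^ (n + 1) = x * (x ^ n - y ^ n) + (x - y) * y ^ n by ring]
    refine (hv _ _).trans (max_le ?_ ?_)
    · calc v (x * (x ^ n - y ^ n)) = v x * v (x ^ n - y ^ n) := map_mul v _ _
        _ ≤ M * (v (x - y) * M ^ n) := by gcongr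
        _ = v (x - y) * M ^ (n + 1) := by ring
    · calc v ((x - y) * y ^ n) = v (x - y) * v y ^ n := by rw [map_mul, map_pow]
        _ ≤ v (x - y) * M ^ n := by gcongr
        _ ≤ v (x - y) * M ^ (n + 1) := by gcongr; exact n.le_succ

lemma abv_eval₂_sub_eval₂_le {R : Type*} [Semiring R] {g : R →+* A} {P : R[X]} {H : ℝ}
    (hv : IsNonarchimedean v) (hM : 1 ≤ M) (hx : v x ≤ M) (hy : v y ≤ M)
    (hP : ∀ i, v (g (P.coeff i)) ≤ H) :
    v (P.eval₂ g x - P.eval₂ g y) ≤ v (x - y) * (H * M ^ P.natDegree) := by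
  have := v.nonneg (x - y)
  have hH : 0 ≤ H := (v.nonneg _).trans (hP 0)
  rw [eval₂_eq_sum_range, eval₂_eq_sum_range, ← Finset.sum_sub_distrib]
  refine Finset.sum_induction _ (fun z => v z ≤ v (x - y) * (H * M ^ P.natDegree))
    (fun z w hz hw => (hv z w).trans (max_le hz hw)) (by rw [map_zero]; positivity)
    fun i hi => ?_
  calc v (g (P.coeff i) * x ^ i - g (P.coeff i) * y ^ i)
      = v (g (P.coeff i)) * v (x ^ i - y ^ i) := by rw [← mul_sub, map_mul]
    _ ≤ H * (v (x - y) * M ^ i) :=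
        mul_le_mul (hP i) (abv_pow_sub_pow_le hv hM hx hy i) (v.nonneg _) hH
    _ = v (x - y) * (H * M ^ i) := by ring
    _ ≤ v (x - y) * (H * M ^ P.natDegree) := by
        gcongr
        exact Finset.mem_range_succ_iff.1 hi

end Nonarchimedean

section Polynomials

variable {R : Type*} [CommRing R]

lemma associated_of_eval₂_eq_zero [IsDomain R] [IsGCDMonoid R] {F : Type*} [Field F]
    {g : R →+* F} (hg : Function.Injective g) {P Q : R[X]} (hP : Irreducible P)
    (hQ : Irreducible Q) (hP0 : P.natDegree ≠ 0) {x : F} (hPx : P.eval₂ g x = 0)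
    (hQx : Q.eval₂ g x = 0) : Associated P Q := by
  let k := FractionRing R
  let ψ : k →+* F := IsFractionRing.lift hg
  have hψ : ψ.comp (algebraMap R k) = g := RingHom.ext fun r => by simp [ψ]
  have eval₂_map_ψ (S : R[X]) : (S.map (algebraMap R k)).eval₂ ψ x = S.eval₂ g x := by
    rw [eval₂_map, hψ]
  have hPprim := hP.isPrimitive hP0
  have hPk := hPprim.irreducible_iff_irreducible_map_fraction_map (K := k).1 hP
  refine (hP.dvd_irreducible_iff_associated hQ).1
    (hPprim.dvd_of_fraction_map_dvd_fraction_map (K := k) ?_)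
  by_contra hndvd
  obtain ⟨a, b, hab⟩ := hPk.coprime_iff_not_dvd.2 hndvd
  simpa [eval₂_map_ψ, hPx, hQx] using congrArg (eval₂ ψ x) hab

lemma two_eq_zero_of_discrim_eq_zero [IsDomain R] [DecompositionMonoid R[X]] {P : R[X]}
    (hP : Irreducible P) (hd : P.natDegree = 2)
    (hdisc : discrim (P.coeff 2) (P.coeff 1) (P.coeff 0) = 0) : (2 : R) = 0 := by
  by_contra h2
  have ha : P.coeff 2 ≠ 0 := hd ▸ leadingCoeff_ne_zero.2 hP.ne_zero
  have hsq : P * C (4 * P.coeff 2) = (C (2 * P.coeff 2) * X + C (P.coeff 1)) ^ 2 := by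
    have hdiscC := congrArg (C : R → R[X]) hdisc
    have hquad := eq_quadratic_of_degree_le_two (natDegree_le_iff_degree_le.1 hd.le)
    simp only [discrim, C_sub, C_mul, C_pow, C_0, C_ofNat] at hdiscC ⊢
    linear_combination 4 * C (P.coeff 2) * hquad - hdiscC
  have hdvd : P ∣ C (2 * P.coeff 2) * X + C (P.coeff 1) :=
    hP.prime.dvd_of_dvd_pow (Dvd.intro _ hsq)
  have hlin := natDegree_linear (b := P.coeff 1) (mul_ne_zero h2 ha)
  have := natDegree_le_of_dvd hdvd (ne_zero_of_natDegree_gt (n := 0) (by lia))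
  lia

lemma exists_eq_sq_add_X_mul_sq {k : Type*} [Field k] [CharP k 2] [PerfectRing k 2] (A : k[X]) :
    ∃ E F : k[X], A = E ^ 2 + X * F ^ 2 := by
  induction A using Polynomial.induction_on' with
  | add A B hA hB =>
    obtain ⟨E, F, rfl⟩ := hA
    obtain ⟨E', F', rfl⟩ := hB
    exact ⟨E + E', F + F', by rw [CharTwo.add_sq, CharTwo.add_sq]; ring⟩
  | monomial n a =>
    obtain ⟨b, rfl⟩ := surjective_frobenius k 2 a
    rw [frobenius_def, ← C_mul_X_pow_eq_monomial, C_pow]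
    obtain ⟨m, rfl | rfl⟩ := Nat.even_or_odd' n
    · exact ⟨C b * X ^ m, 0, by ring⟩
    · exact ⟨0, C b * X ^ m, by ring⟩

end Polynomials

section AbsoluteValues

variable {Fq}

lemma one_lt_card : (1 : ℝ) < Fintype.card Fq := mod_cast Fintype.one_lt_card

lemma kabs_zero : kabs Fq 0 = 0 := if_pos rfl

lemma kabs_of_ne_zero {f : K Fq} (h : f ≠ 0) :
    kabs Fq f = (Fintype.card Fq : ℝ) ^ (-f.order) := if_neg h

lemma kabs_nonneg (f : K Fq) : 0 ≤ kabs Fq f := by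
  unfold kabs
  positivity

lemma kabs_eq_zero {f : K Fq} : kabs Fq f = 0 ↔ f = 0 := by
  refine ⟨fun h => ?_, fun h => h ▸ kabs_zero⟩
  by_contra hf
  rw [kabs_of_ne_zero hf] at h
  exact (zpow_pos (one_pos.trans one_lt_card) _).ne' h

lemma kabs_mul (f g : K Fq) : kabs Fq (f * g) = kabs Fq f * kabs Fq g := by
  rcases eq_or_ne f 0 with rfl | hf
  · simp only [zero_mul, kabs_zero]
  rcases eq_or_ne g 0 with rfl | hg
  · simp only [mul_zero, kabs_zero]
  rw [kabs_of_ne_zero hf, kabs_of_ne_zero hg, kabs_of_ne_zero (mul_ne_zero hf hg),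
    HahnSeries.order_mul hf hg, neg_add, zpow_add₀ (one_pos.trans one_lt_card).ne']

variable (Fq) in
lemma isNonarchimedean_kabs : IsNonarchimedean (kabs Fq) := fun f g => by
  rcases eq_or_ne f 0 with rfl | hf
  · exact (zero_add g).symm ▸ le_max_right _ _
  rcases eq_or_ne g 0 with rfl | hg
  · exact (add_zero f).symm ▸ le_max_left _ _
  rcases eq_or_ne (f + g) 0 with hfg | hfg
  · rw [hfg, kabs_zero]
    exact le_max_of_le_left (kabs_nonneg f)
  rw [kabs_of_ne_zero hf, kabs_of_ne_zero hg, kabs_of_ne_zero hfg,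
    ← (zpow_right_mono₀ one_lt_card.le).map_max]
  refine zpow_le_zpow_right₀ one_lt_card.le ?_
  rw [max_neg_neg]
  exact neg_le_neg (HahnSeries.min_order_le_order_add hfg)

variable (Fq) in
/-- The absolute value `|·|` on `F_q((T⁻¹))`, as a bundled `AbsoluteValue`. -/
def seriesAbs : AbsoluteValue (K Fq) ℝ where
  toFun := kabs Fq
  map_mul' := kabs_mul
  nonneg' := kabs_nonneg
  eq_zero' _ := kabs_eq_zero
  add_le' f g := (isNonarchimedean_kabs Fq f g).trans
    (max_le_add_of_nonneg (kabs_nonneg f) (kabs_nonneg g))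

lemma kabs_pos {f : K Fq} : 0 < kabs Fq f ↔ f ≠ 0 := (seriesAbs Fq).pos_iff

lemma kabs_one : kabs Fq 1 = 1 := map_one (seriesAbs Fq)

lemma kabs_neg (f : K Fq) : kabs Fq (-f) = kabs Fq f := (seriesAbs Fq).map_neg f

lemma kabs_pow (f : K Fq) (n : ℕ) : kabs Fq (f ^ n) = kabs Fq f ^ n := map_pow (seriesAbs Fq) f n

lemma kabs_inv (f : K Fq) : kabs Fq f⁻¹ = (kabs Fq f)⁻¹ := map_inv₀ (seriesAbs Fq) f

lemma kabs_sub_le (f g : K Fq) : kabs Fq (f - g) ≤ max (kabs Fq f) (kabs Fq g) := by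
  rw [sub_eq_add_neg, ← kabs_neg g]
  exact isNonarchimedean_kabs Fq f (-g)

lemma kabs_add_eq_left {f g : K Fq} (h : kabs Fq g < kabs Fq f) :
    kabs Fq (f + g) = kabs Fq f :=
  IsNonarchimedean.add_eq_left_of_lt (f := seriesAbs Fq) (isNonarchimedean_kabs Fq) h

lemma coeff_polyToK {F : Type} [Field F] (A : F[X]) (n : ℕ) :
    (polyToK F A).coeff (-n) = A.coeff n := by
  induction A using Polynomial.induction_on' with
  | add A B hA hB => rw [map_add, HahnSeries.coeff_add, hA, hB, coeff_add]
  | monomial i c =>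
    have hmon : polyToK F (monomial i c) = HahnSeries.single (-(i : ℤ)) c := by
      simp [polyToK, TT, eval₂_monomial, HahnSeries.C_apply]
    rw [hmon, HahnSeries.coeff_single, coeff_monomial]
    simp only [neg_inj, Nat.cast_inj, eq_comm]

lemma polyToK_injective {F : Type} [Field F] : Function.Injective (polyToK F) := fun A B h =>
  Polynomial.ext fun n => by rw [← coeff_polyToK, h, coeff_polyToK]

lemma order_polyToK {F : Type} [Field F] {A : F[X]} (hA : A ≠ 0) :
    (polyToK F A).order = -(A.natDegree : ℤ) := by
  have hle : (polyToK F A).order ≤ -(A.natDegree : ℤ) :=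
    HahnSeries.order_le_of_coeff_ne_zero (by
      rw [coeff_polyToK]
      exact leadingCoeff_ne_zero.2 hA)
  obtain ⟨n, hn⟩ := Int.eq_ofNat_of_zero_le (a := -(polyToK F A).order) (by lia)
  have hcoeff : (polyToK F A).coeff (polyToK F A).order ≠ 0 :=
    HahnSeries.coeff_order_eq_zero.not.2 ((map_ne_zero_iff _ polyToK_injective).2 hA)
  rw [neg_eq_iff_eq_neg.1 hn, coeff_polyToK] at hcoeff
  have := le_natDegree_of_ne_zero hcoeff
  lia

variable (Fq) in
/-- The absolute value `|·|` on `F_q[T]`, as a bundled `AbsoluteValue`. -/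
def polyAbs : AbsoluteValue Fq[X] ℝ := (seriesAbs Fq).comp polyToK_injective

lemma kabs_polyToK (A : Fq[X]) : kabs Fq (polyToK Fq A) = polyAbs Fq A := rfl

lemma polyAbs_of_ne_zero {A : Fq[X]} (hA : A ≠ 0) :
    polyAbs Fq A = (Fintype.card Fq : ℝ) ^ A.natDegree := by
  rw [← kabs_polyToK, kabs_of_ne_zero ((map_ne_zero_iff _ polyToK_injective).2 hA),
    order_polyToK hA, neg_neg, zpow_natCast]

lemma one_le_polyAbs {A : Fq[X]} (hA : A ≠ 0) : 1 ≤ polyAbs Fq A :=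
  polyAbs_of_ne_zero hA ▸ one_le_pow₀ one_lt_card.le

lemma polyAbs_of_isUnit {A : Fq[X]} (hA : IsUnit A) : polyAbs Fq A = 1 := by
  rw [polyAbs_of_ne_zero hA.ne_zero, natDegree_eq_zero_of_isUnit hA, pow_zero]

variable (Fq) in
lemma isNonarchimedean_polyAbs : IsNonarchimedean (polyAbs Fq) := fun A B =>
  (congrArg (kabs Fq) (map_add (polyToK Fq) A B)).trans_le (isNonarchimedean_kabs Fq _ _)

lemma finite_polyAbs_le (B : ℝ) : {A : Fq[X] | polyAbs Fq A ≤ B}.Finite := by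
  obtain ⟨n, hn⟩ := pow_unbounded_of_one_lt B (one_lt_card (Fq := Fq))
  have : Finite (degreeLT Fq n) := Finite.of_equiv _ (degreeLTEquiv Fq n).toEquiv.symm
  refine (Set.toFinite (degreeLT Fq n : Set Fq[X])).subset fun A hA => ?_
  rcases eq_or_ne A 0 with rfl | hA0
  · exact zero_mem _
  have hlt := (polyAbs_of_ne_zero hA0 ▸ hA : (Fintype.card Fq : ℝ) ^ A.natDegree ≤ B).trans_lt hn
  rw [SetLike.mem_coe, mem_degreeLT, ← natDegree_lt_iff_degree_lt hA0]
  exact (pow_lt_pow_iff_right₀ one_lt_card).1 hlt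

end AbsoluteValues

section Height

variable {Fq}

lemma Hpoly_eq_gaussNorm (P : Fq[X][X]) : Hpoly Fq P = P.gaussNorm (polyAbs Fq) 1 := by
  have hle (i : ℕ) : polyAbs Fq (P.coeff i) ≤ P.gaussNorm (polyAbs Fq) 1 := by
    simpa using P.le_gaussNorm (polyAbs Fq) zero_le_one i
  obtain ⟨i, hi⟩ := P.exists_eq_gaussNorm (polyAbs Fq) 1
  refine le_antisymm (ciSup_le hle) (hi.trans_le ?_)
  rw [one_pow, mul_one]
  exact le_ciSup (f := fun i => polyAbs Fq (P.coeff i)) ⟨_, Set.forall_mem_range.2 hle⟩ i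

lemma polyAbs_coeff_le_Hpoly (P : Fq[X][X]) (i : ℕ) : polyAbs Fq (P.coeff i) ≤ Hpoly Fq P := by
  simpa [Hpoly_eq_gaussNorm] using P.le_gaussNorm (polyAbs Fq) zero_le_one i

lemma Hpoly_le {P : Fq[X][X]} {B : ℝ} (h : ∀ i, polyAbs Fq (P.coeff i) ≤ B) : Hpoly Fq P ≤ B :=
  ciSup_le h

lemma one_le_Hpoly {P : Fq[X][X]} (hP : P ≠ 0) : 1 ≤ Hpoly Fq P :=
  (one_le_polyAbs (leadingCoeff_ne_zero.2 hP)).trans (polyAbs_coeff_le_Hpoly P P.natDegree)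

lemma Hpoly_nonneg (P : Fq[X][X]) : 0 ≤ Hpoly Fq P :=
  ((polyAbs Fq).nonneg _).trans (polyAbs_coeff_le_Hpoly P 0)

lemma Hpoly_mul (P Q : Fq[X][X]) : Hpoly Fq (P * Q) = Hpoly Fq P * Hpoly Fq Q := by
  simp only [Hpoly_eq_gaussNorm]
  exact gaussNorm_mul (isNonarchimedean_polyAbs Fq) one_pos P Q

lemma Hpoly_C (A : Fq[X]) : Hpoly Fq (C A) = polyAbs Fq A := by
  rw [Hpoly_eq_gaussNorm, gaussNorm_C]

variable (Fq) in
lemma isNonarchimedean_Hpoly : IsNonarchimedean (Hpoly Fq) := fun P Q => by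
  simp only [Hpoly_eq_gaussNorm]
  exact isNonarchimedean_gaussNorm _ (isNonarchimedean_polyAbs Fq) zero_le_one P Q

variable (Fq) in
/-- The height `H` of polynomials over `F_q[T]`, as a bundled `AbsoluteValue`. -/
def heightAbs : AbsoluteValue Fq[X][X] ℝ where
  toFun := Hpoly Fq
  map_mul' := Hpoly_mul
  nonneg' := Hpoly_nonneg
  eq_zero' P := by
    rw [Hpoly_eq_gaussNorm]
    exact gaussNorm_eq_zero_iff _ P (fun _ => (polyAbs Fq).eq_zero.1) one_pos
  add_le' P Q := (isNonarchimedean_Hpoly Fq P Q).trans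
    (max_le_add_of_nonneg (Hpoly_nonneg P) (Hpoly_nonneg Q))

lemma heightAbs_apply (P : Fq[X][X]) : heightAbs Fq P = Hpoly Fq P := rfl

lemma Hpoly_eq_of_associated {P Q : Fq[X][X]} (h : Associated P Q) : Hpoly Fq P = Hpoly Fq Q := by
  obtain ⟨u, rfl⟩ := h
  obtain ⟨r, hr, hu⟩ := Polynomial.isUnit_iff.1 u.isUnit
  rw [Hpoly_mul, ← hu, Hpoly_C, polyAbs_of_isUnit hr, mul_one]

lemma finite_natDegree_le_and_Hpoly_le (n : ℕ) (B : ℝ) :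
    {P : Fq[X][X] | P.natDegree ≤ n ∧ Hpoly Fq P ≤ B}.Finite := by
  have hpi : (Set.univ.pi fun _ : Fin (n + 1) => {A : Fq[X] | polyAbs Fq A ≤ B}).Finite :=
    Set.Finite.pi fun _ => finite_polyAbs_le B
  refine hpi.of_injOn (f := fun P (i : Fin (n + 1)) => P.coeff i) ?_ fun P hP Q hQ hPQ => ?_
  · exact fun P hP => Set.mem_univ_pi.2 fun i => (polyAbs_coeff_le_Hpoly P i).trans hP.2
  · exact (ext_iff_natDegree_le hP.1 hQ.1).2 fun i hi => congrFun hPQ ⟨i, Nat.lt_succ_of_le hi⟩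

end Height

section AlgebraicElements

variable {F : Type} [Field F] {P Q : F[X][X]} {α : L F}

lemma phi_injective : Function.Injective (φ F) :=
  (algebraMap (K F) (L F)).injective.comp polyToK_injective

lemma evalK_C (A : F[X]) (ξ : K F) : evalK F (C A) ξ = polyToK F A := eval₂_C _ _

lemma evalL_toL (P : F[X][X]) (ξ : K F) : evalL F P (toL F ξ) = toL F (evalK F P ξ) :=
  (hom_eval₂ P (polyToK F) (toL F) ξ).symm

lemma evalL_toL_eq_zero {ξ : K F} : evalL F P (toL F ξ) = 0 ↔ evalK F P ξ = 0 := by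
  rw [evalL_toL]
  exact map_eq_zero (algebraMap (K F) (L F))

lemma ne_zero_of_evalK_ne_zero {ξ : K F} (h : evalK F P ξ ≠ 0) : P ≠ 0 :=
  ne_of_apply_ne (evalK F · ξ) (by simpa only [evalK, eval₂_zero] using h)

lemma exists_evalL_eq_zero (hP : P.natDegree ≠ 0) : ∃ α, evalL F P α = 0 :=
  IsAlgClosed.exists_eval₂_eq_zero_of_injective (φ F) phi_injective P
    fun h => hP (natDegree_eq_of_degree_eq_some h)

lemma isAlgElem_of_irreducible (hP : Irreducible P) (hP0 : P.natDegree ≠ 0)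
    (hα : evalL F P α = 0) : IsAlgElem F α := by
  have hlead : P.leadingCoeff.leadingCoeff ≠ 0 :=
    leadingCoeff_ne_zero.2 (leadingCoeff_ne_zero.2 hP.ne_zero)
  let u : F := P.leadingCoeff.leadingCoeff⁻¹
  have hu : IsUnit (C (C u) : F[X][X]) := isUnit_C.2 (isUnit_C.2 (inv_ne_zero hlead).isUnit)
  have hirr : Irreducible (C (C u) * P) := (irreducible_isUnit_mul hu).2 hP
  have hdeg : (C (C u) * P).natDegree = P.natDegree :=
    natDegree_C_mul (C_ne_zero.2 (inv_ne_zero hlead))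
  refine ⟨C (C u) * P, hdeg ▸ hP0.bot_lt, hirr, hirr.isPrimitive (hdeg ▸ hP0), ?_, ?_⟩
  · rw [leadingCoeff_mul, leadingCoeff_C, Monic, leadingCoeff_mul, leadingCoeff_C,
      inv_mul_cancel₀ hlead]
  · rw [evalL, eval₂_mul, ← evalL, ← evalL, hα, mul_zero]

lemma minPolyPrim_spec (h : IsAlgElem F α) : IsMinPolyOf F (minPolyPrim F α) α := by
  rw [minPolyPrim, dif_pos h]
  exact h.choose_spec

lemma associated_minPolyPrim (hP : Irreducible P) (hP0 : P.natDegree ≠ 0)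
    (hα : evalL F P α = 0) : Associated P (minPolyPrim F α) := by
  obtain ⟨-, hirr, -, -, hroot⟩ := minPolyPrim_spec (isAlgElem_of_irreducible hP hP0 hα)
  exact associated_of_eval₂_eq_zero phi_injective hP hirr hP0 hα hroot

lemma degAlg_of_irreducible (hP : Irreducible P) (hP0 : P.natDegree ≠ 0)
    (hα : evalL F P α = 0) : degAlg F α = P.natDegree :=
  (natDegree_eq_of_degree_eq (degree_eq_degree_of_associated
    (associated_minPolyPrim hP hP0 hα))).symm

variable {Fq}

lemma heightAlg_of_irreducible {P : Fq[X][X]} {α : L Fq} (hP : Irreducible P)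
    (hP0 : P.natDegree ≠ 0) (hα : evalL Fq P α = 0) : heightAlg Fq α = Hpoly Fq P :=
  (Hpoly_eq_of_associated (associated_minPolyPrim hP hP0 hα)).symm

lemma one_le_heightAlg {α : L Fq} (h : IsAlgElem Fq α) : 1 ≤ heightAlg Fq α :=
  one_le_Hpoly (minPolyPrim_spec h).2.1.ne_zero

lemma finite_degAlg_le_and_heightAlg_le (n : ℕ) (B : ℝ) :
    {α : L Fq | IsAlgElem Fq α ∧ degAlg Fq α ≤ n ∧ heightAlg Fq α ≤ B}.Finite := by
  refine ((finite_natDegree_le_and_Hpoly_le n B).biUnion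
    (t := fun P => {α : L Fq | P ≠ 0 ∧ evalL Fq P α = 0}) fun P _ => ?_).subset
    fun α ⟨hα, hdeg, hheight⟩ => ?_
  · by_cases hP : P = 0
    · exact Set.finite_empty.subset fun α hα => hα.1 hP
    refine (finite_setOfPred_isRoot ((Polynomial.map_ne_zero_iff phi_injective).2 hP)).subset
      fun α hα => ?_
    exact (eval_map (φ Fq) α).trans hα.2
  · obtain ⟨-, hirr, -, -, hroot⟩ := minPolyPrim_spec hα
    exact Set.mem_biUnion ⟨hdeg, hheight⟩ ⟨hirr.ne_zero, hroot⟩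

end AlgebraicElements

namespace IsAbsExt

variable {Fq} {v : L Fq → ℝ}

/-- The extension of `|·|` to the algebraic closure, as a bundled `AbsoluteValue`. -/
def abv (hv : IsAbsExt Fq v) : AbsoluteValue (L Fq) ℝ where
  toFun := v
  map_mul' := hv.map_mul
  nonneg' := hv.nonneg
  eq_zero' := hv.eq_zero_iff
  add_le' x y := (hv.add_le x y).trans (max_le_add_of_nonneg (hv.nonneg x) (hv.nonneg y))

lemma pos_iff (hv : IsAbsExt Fq v) {x : L Fq} : 0 < v x ↔ x ≠ 0 := hv.abv.pos_iff

lemma map_pow (hv : IsAbsExt Fq v) (x : L Fq) (n : ℕ) : v (x ^ n) = v x ^ n :=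
  _root_.map_pow hv.abv x n

lemma sub_le (hv : IsAbsExt Fq v) (x y : L Fq) : v (x - y) ≤ max (v x) (v y) :=
  (congrArg v (sub_eq_add_neg x y)).trans_le
    ((hv.add_le x (-y)).trans_eq (congrArg (max (v x)) (hv.abv.map_neg y)))

lemma map_phi (hv : IsAbsExt Fq v) (A : Fq[X]) : v (φ Fq A) = polyAbs Fq A := hv.extends_kabs _

lemma kabs_evalK_le (hv : IsAbsExt Fq v) {P : Fq[X][X]} {ξ : K Fq} {α : L Fq}
    (hα : evalL Fq P α = 0) (hξα : v (toL Fq ξ - α) ≤ 1) :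
    kabs Fq (evalK Fq P ξ) ≤
      v (toL Fq ξ - α) * (Hpoly Fq P * max (kabs Fq ξ) 1 ^ P.natDegree) := by
  have hvα : v α ≤ max (kabs Fq ξ) 1 := by
    have hsub := hv.sub_le (toL Fq ξ) (toL Fq ξ - α)
    rw [sub_sub_cancel, hv.extends_kabs] at hsub
    exact hsub.trans (max_le_max le_rfl hξα)
  have hvξ : v (toL Fq ξ) ≤ max (kabs Fq ξ) 1 := (hv.extends_kabs ξ).trans_le (le_max_left _ _)
  have hlip : v (evalL Fq P (toL Fq ξ) - evalL Fq P α) ≤ _ :=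
    abv_eval₂_sub_eval₂_le (v := hv.abv) hv.add_le (le_max_right _ _) hvξ hvα
      fun i => (hv.map_phi _).trans_le (polyAbs_coeff_le_Hpoly P i)
  rwa [hα, sub_zero, evalL_toL, hv.extends_kabs] at hlip

end IsAbsExt

section Exponents

variable {Fq} {v : L Fq → ℝ} {n : ℕ} {ξ : K Fq} {s : ℝ}

/-- The values at `ξ` of polynomials of degree at most `n` satisfy `|P(ξ)| ≥ c H(P)^{-s}` for some
`c > 0`, unless they vanish. This holds for `s > w_n(ξ)` and fails for `s < w_n(ξ)`. -/
def PolyBound (n : ℕ) (ξ : K Fq) (s : ℝ) : Prop :=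
  ∃ c : ℝ, 0 < c ∧ ∀ P : Fq[X][X], P.natDegree ≤ n → evalK Fq P ξ ≠ 0 →
    c * Hpoly Fq P ^ (-s) ≤ kabs Fq (evalK Fq P ξ)

/-- Algebraic elements `α ≠ ξ` of degree at most `n` satisfy `|ξ - α| ≥ c H(α)^{-s-1}` for some
`c > 0`. This holds for `s > w_n^*(ξ)` and fails for `s < w_n^*(ξ)`. -/
def AlgBound (v : L Fq → ℝ) (n : ℕ) (ξ : K Fq) (s : ℝ) : Prop :=
  ∃ c : ℝ, 0 < c ∧ ∀ α : L Fq, IsAlgElem Fq α → degAlg Fq α ≤ n → toL Fq ξ ≠ α →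
    c * heightAlg Fq α ^ (-s - 1) ≤ v (toL Fq ξ - α)

lemma wExp_le_of_polyBound (h : PolyBound n ξ s) : wExp Fq n ξ ≤ s := by
  obtain ⟨c, hc, h⟩ := h
  refine sSup_le ?_
  rintro _ ⟨w, rfl, hinf⟩
  by_contra! hsw
  have hfin := finite_le_rpow_neg (S := {P : Fq[X][X] | P.natDegree ≤ n ∧ evalK Fq P ξ ≠ 0})
    (H := Hpoly Fq) (fun P hP => one_le_Hpoly (ne_zero_of_evalK_ne_zero hP.2))
    (fun B => (finite_natDegree_le_and_Hpoly_le n B).subset fun P hP => ⟨hP.1.1, hP.2⟩)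
    hc (fun P hP => h P hP.1 hP.2) (EReal.coe_lt_coe_iff.1 hsw)
  exact hinf (hfin.subset fun P hP => ⟨⟨hP.1, kabs_pos.1 hP.2.1⟩, hP.2.2⟩)

lemma polyBound_of_wExp_lt (h : wExp Fq n ξ < s) : PolyBound n ξ s := by
  obtain ⟨c, hc, hbound⟩ := exists_mul_rpow_neg_le (H := Hpoly Fq) (s := s)
    (S := {P : Fq[X][X] | P.natDegree ≤ n ∧ 0 < kabs Fq (evalK Fq P ξ)}) (fun P hP => hP.2) (by
      by_contra hinf
      refine h.not_ge (le_sSup ⟨s, rfl, ?_⟩)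
      simpa only [Set.Infinite, Set.mem_ofPred_eq, and_assoc] using hinf)
  exact ⟨c, hc, fun P hP hPξ => hbound P ⟨hP, kabs_pos.2 hPξ⟩⟩

lemma wStarExp_le_of_forall_notMem (hv : IsAbsExt Fq v) {S : Set (L Fq)} (hS : S.Finite) {c : ℝ}
    (hc : 0 < c) (h : ∀ α : L Fq, IsAlgElem Fq α → degAlg Fq α ≤ n → toL Fq ξ ≠ α → α ∉ S →
      c * heightAlg Fq α ^ (-s - 1) ≤ v (toL Fq ξ - α)) : wStarExp Fq v n ξ ≤ s := by
  refine sSup_le ?_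
  rintro _ ⟨w, rfl, hinf⟩
  by_contra! hsw
  have hfin := finite_le_rpow_neg (H := heightAlg Fq) (s := s + 1) (w := w + 1)
    (S := {α : L Fq | IsAlgElem Fq α ∧ degAlg Fq α ≤ n ∧ toL Fq ξ ≠ α ∧ α ∉ S})
    (fun α hα => one_le_heightAlg hα.1)
    (fun B => (finite_degAlg_le_and_heightAlg_le n B).subset
      fun α hα => ⟨hα.1.1, hα.1.2.1, hα.2⟩)
    hc (fun α hα => by simpa only [neg_add'] using h α hα.1 hα.2.1 hα.2.2.1 hα.2.2.2)
    (by simpa using hsw)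
  refine hinf ((hS.union hfin).subset fun α ⟨hα, hdeg, hpos, hle⟩ => ?_)
  rw [← neg_add'] at hle
  exact or_iff_not_imp_left.2 fun hαS =>
    ⟨⟨hα, hdeg, sub_ne_zero.1 (hv.pos_iff.1 hpos), hαS⟩, hle⟩

lemma wStarExp_le_of_algBound (hv : IsAbsExt Fq v) (h : AlgBound v n ξ s) :
    wStarExp Fq v n ξ ≤ s := by
  obtain ⟨c, hc, h⟩ := h
  exact wStarExp_le_of_forall_notMem hv Set.finite_empty hc fun α hα hdeg hne _ => h α hα hdeg hne

lemma algBound_of_wStarExp_lt (hv : IsAbsExt Fq v) (h : wStarExp Fq v n ξ < s) :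
    AlgBound v n ξ s := by
  obtain ⟨c, hc, hbound⟩ := exists_mul_rpow_neg_le (H := heightAlg Fq) (s := s + 1)
    (f := fun α => v (toL Fq ξ - α))
    (S := {α : L Fq | IsAlgElem Fq α ∧ degAlg Fq α ≤ n ∧ 0 < v (toL Fq ξ - α)})
    (fun α hα => hα.2.2) (by
      by_contra hinf
      refine h.not_ge (le_sSup ⟨s, rfl, ?_⟩)
      simpa only [Set.Infinite, Set.mem_ofPred_eq, and_assoc, neg_add'] using hinf)
  refine ⟨c, hc, fun α hα hdeg hne => ?_⟩
  rw [← neg_add']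
  exact hbound α ⟨hα, hdeg, hv.pos_iff.2 (sub_ne_zero.2 hne)⟩

lemma Hpoly_rpow_neg_le_of_natDegree_eq_zero {P : Fq[X][X]} (hs : 0 ≤ s) (hP : P.natDegree = 0)
    (hPξ : evalK Fq P ξ ≠ 0) : Hpoly Fq P ^ (-s) ≤ kabs Fq (evalK Fq P ξ) := by
  have hone := one_le_Hpoly (ne_zero_of_evalK_ne_zero hPξ)
  rw [eq_C_of_natDegree_eq_zero hP, Hpoly_C] at hone ⊢
  rw [evalK_C, kabs_polyToK]
  exact (Real.rpow_le_one_of_one_le_of_nonpos hone (neg_nonpos.2 hs)).trans hone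

lemma polyBound_of_irreducible (hs : 0 ≤ s) {c : ℝ} (hc : 0 < c)
    (h : ∀ P : Fq[X][X], P.natDegree ≤ n → P.natDegree ≠ 0 → Irreducible P → evalK Fq P ξ ≠ 0 →
      c * Hpoly Fq P ^ (-s) ≤ kabs Fq (evalK Fq P ξ)) : PolyBound n ξ s := by
  let d := min c 1
  have hd : 0 < d := lt_min hc one_pos
  have hd1 : d ≤ 1 := min_le_right c 1
  have hnonneg (P : Fq[X][X]) : 0 ≤ Hpoly Fq P ^ (-s) := Real.rpow_nonneg (Hpoly_nonneg P) _
  have hirr (P : Fq[X][X]) (hP : Irreducible P) (hPn : P.natDegree ≤ n)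
      (hPξ : evalK Fq P ξ ≠ 0) :
      d ^ P.natDegree * Hpoly Fq P ^ (-s) ≤ kabs Fq (evalK Fq P ξ) := by
    by_cases hP0 : P.natDegree = 0
    · rw [hP0, pow_zero, one_mul]
      exact Hpoly_rpow_neg_le_of_natDegree_eq_zero hs hP0 hPξ
    · exact (mul_le_mul_of_nonneg_right ((pow_le_of_le_one hd.le hd1 hP0).trans (min_le_left c 1))
        (hnonneg P)).trans (h P hPn hP0 hP hPξ)
  have hall (P : Fq[X][X]) : P.natDegree ≤ n → evalK Fq P ξ ≠ 0 →
      d ^ P.natDegree * Hpoly Fq P ^ (-s) ≤ kabs Fq (evalK Fq P ξ) := by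
    induction P using WfDvdMonoid.induction_on_irreducible with
    | zero => exact fun _ h0 => absurd rfl (ne_zero_of_evalK_ne_zero h0)
    | unit u hu =>
      intro _ huξ
      have hu0 := natDegree_eq_zero_of_isUnit hu
      rw [hu0, pow_zero, one_mul]
      exact Hpoly_rpow_neg_le_of_natDegree_eq_zero hs hu0 huξ
    | mul Q P hQ hP ih =>
      rw [evalK, eval₂_mul, ← evalK, ← evalK, natDegree_mul hP.ne_zero hQ, Hpoly_mul, kabs_mul,
        Real.mul_rpow (Hpoly_nonneg _) (Hpoly_nonneg _), pow_add, mul_mul_mul_comm]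
      intro hPQn hPQξ
      exact mul_le_mul (hirr P hP (by lia) (left_ne_zero_of_mul hPQξ))
        (ih (by lia) (right_ne_zero_of_mul hPQξ)) (mul_nonneg (by positivity) (hnonneg Q))
        (kabs_nonneg _)
  refine ⟨d ^ n, by positivity, fun P hPn hPξ => le_trans ?_ (hall P hPn hPξ)⟩
  exact mul_le_mul_of_nonneg_right (pow_le_pow_of_le_one hd.le hd1 hPn) (hnonneg P)

end Exponents

section QuadraticRoots

variable {Fq} {v : L Fq → ℝ} {P : Fq[X][X]}

lemma eval₂_eq_of_natDegree_le_two {A B : Type*} [Semiring A] [CommSemiring B] (g : A →+* B)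
    {P : A[X]} (hP : P.natDegree ≤ 2) (x : B) :
    P.eval₂ g x = g (P.coeff 2) * x ^ 2 + g (P.coeff 1) * x + g (P.coeff 0) := by
  rw [eval₂_eq_sum_range' _ (Nat.lt_succ_of_le hP)]
  simp only [Finset.sum_range_succ, Finset.sum_range_zero]
  ring

lemma evalL_eq_of_natDegree_le_two {F : Type} [Field F] {P : F[X][X]} (hP : P.natDegree ≤ 2)
    (x : L F) :
    evalL F P x = φ F (P.coeff 2) * x ^ 2 + φ F (P.coeff 1) * x + φ F (P.coeff 0) :=
  eval₂_eq_of_natDegree_le_two (φ F) hP x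

lemma evalL_derivative_of_natDegree_le_two {F : Type} [Field F] {P : F[X][X]}
    (hP : P.natDegree ≤ 2) (x : L F) :
    evalL F (derivative P) x = 2 * φ F (P.coeff 2) * x + φ F (P.coeff 1) := by
  rw [evalL_eq_of_natDegree_le_two ((natDegree_derivative_le P).trans (by lia))]
  have h3 : P.coeff 3 = 0 := coeff_eq_zero_of_natDegree_lt (by lia)
  simp only [coeff_derivative, h3, zero_mul, map_zero, map_mul, map_add, map_natCast, map_one]
  push_cast
  ring

lemma exists_vieta_of_natDegree_eq_two {F : Type} [Field F] {P : F[X][X]}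
    (hP : P.natDegree = 2) : ∃ α β : L F, φ F (P.coeff 1) = -(φ F (P.coeff 2) * (α + β)) ∧
      φ F (P.coeff 0) = φ F (P.coeff 2) * (α * β) := by
  have hlead : φ F (P.coeff 2) ≠ 0 :=
    (map_ne_zero_iff _ phi_injective).2 (hP ▸ leadingCoeff_ne_zero.2 (by rintro rfl; simp at hP))
  obtain ⟨α, hα⟩ := exists_evalL_eq_zero (P := P) (by lia)
  rw [evalL_eq_of_natDegree_le_two hP.le] at hα
  refine ⟨α, -φ F (P.coeff 1) / φ F (P.coeff 2) - α, by field_simp; ring, ?_⟩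
  field_simp
  linear_combination hα

-- `D` is `|a(ξ - β)|`, where `a` is the leading coefficient and `β` the root farther from `ξ`.
lemma exists_nearest_root (hv : IsAbsExt Fq v) (hP : P.natDegree = 2) (ξ : K Fq) :
    ∃ (α : L Fq) (D : ℝ), evalL Fq P α = 0 ∧ 0 ≤ D ∧
      kabs Fq (evalK Fq P ξ) = v (toL Fq ξ - α) * D ∧
      kabs Fq (evalK Fq (derivative P) ξ) ≤ D ∧
      polyAbs Fq (discrim (P.coeff 2) (P.coeff 1) (P.coeff 0)) ≤ D ^ 2 := by
  obtain ⟨α, β, h1, h0, hle⟩ : ∃ α β : L Fq,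
      φ Fq (P.coeff 1) = -(φ Fq (P.coeff 2) * (α + β)) ∧
      φ Fq (P.coeff 0) = φ Fq (P.coeff 2) * (α * β) ∧ v (toL Fq ξ - α) ≤ v (toL Fq ξ - β) := by
    obtain ⟨α, β, h1, h0⟩ := exists_vieta_of_natDegree_eq_two hP
    rcases le_total (v (toL Fq ξ - α)) (v (toL Fq ξ - β)) with hle | hle
    · exact ⟨α, β, h1, h0, hle⟩
    · exact ⟨β, α, add_comm α β ▸ h1, mul_comm α β ▸ h0, hle⟩
  have heval (x : L Fq) : evalL Fq P x = φ Fq (P.coeff 2) * (x - α) * (x - β) := by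
    rw [evalL_eq_of_natDegree_le_two hP.le, h1, h0]
    ring
  have hderiv : evalL Fq (derivative P) (toL Fq ξ) =
      φ Fq (P.coeff 2) * ((toL Fq ξ - α) + (toL Fq ξ - β)) := by
    rw [evalL_derivative_of_natDegree_le_two hP.le, h1]
    ring
  have hdiscrim : φ Fq (discrim (P.coeff 2) (P.coeff 1) (P.coeff 0)) =
      (φ Fq (P.coeff 2) * (α - β)) ^ 2 := by
    simp only [discrim, map_sub, map_mul, map_pow, map_ofNat, h1, h0]
    ring
  have hmul (x : L Fq) (hx : v x ≤ v (toL Fq ξ - β)) :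
      v (φ Fq (P.coeff 2) * x) ≤ v (φ Fq (P.coeff 2) * (toL Fq ξ - β)) := by
    rw [hv.map_mul, hv.map_mul]
    exact mul_le_mul_of_nonneg_left hx (hv.nonneg _)
  refine ⟨α, v (φ Fq (P.coeff 2) * (toL Fq ξ - β)),
    by rw [heval, sub_self, mul_zero, zero_mul], hv.nonneg _, ?_, ?_, ?_⟩
  · rw [← hv.extends_kabs, ← evalL_toL, heval, ← hv.map_mul]
    ring_nf
  · rw [← hv.extends_kabs, ← evalL_toL, hderiv]
    exact hmul _ ((hv.add_le _ _).trans (max_le hle le_rfl))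
  · rw [← hv.map_phi, hdiscrim, hv.map_pow, ← sub_sub_sub_cancel_left]
    exact pow_le_pow_left₀ (hv.nonneg _) (hmul _ ((hv.sub_le _ _).trans (max_le le_rfl hle))) 2

lemma exists_root_le_of_discrim_ne_zero (hv : IsAbsExt Fq v) (hP : P.natDegree = 2)
    (hdisc : discrim (P.coeff 2) (P.coeff 1) (P.coeff 0) ≠ 0) (ξ : K Fq) :
    ∃ α, evalL Fq P α = 0 ∧ v (toL Fq ξ - α) ≤ kabs Fq (evalK Fq P ξ) := by
  obtain ⟨α, D, hα, hD, hPξ, -, hdiscD⟩ := exists_nearest_root hv hP ξ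
  have hD1 : 1 ≤ D := (one_le_sq_iff₀ hD).1 ((one_le_polyAbs hdisc).trans hdiscD)
  exact ⟨α, hα, hPξ ▸ le_mul_of_one_le_right (hv.nonneg _) hD1⟩

lemma kabs_evalK_le_mul_max (hv : IsAbsExt Fq v) (hP : P.natDegree = 2) {ξ : K Fq} {α : L Fq}
    (hα : evalL Fq P α = 0) : kabs Fq (evalK Fq P ξ) ≤ v (toL Fq ξ - α) *
      max (kabs Fq (evalK Fq (derivative P) ξ)) (polyAbs Fq (P.coeff 2) * v (toL Fq ξ - α)) := by
  have htaylor : evalL Fq P (toL Fq ξ) = (toL Fq ξ - α) *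
      (evalL Fq (derivative P) (toL Fq ξ) - φ Fq (P.coeff 2) * (toL Fq ξ - α)) := by
    rw [evalL_derivative_of_natDegree_le_two hP.le, evalL_eq_of_natDegree_le_two hP.le]
    rw [evalL_eq_of_natDegree_le_two hP.le] at hα
    linear_combination hα
  calc kabs Fq (evalK Fq P ξ)
      = v (toL Fq ξ - α) *
          v (evalL Fq (derivative P) (toL Fq ξ) - φ Fq (P.coeff 2) * (toL Fq ξ - α)) := by
        rw [← hv.extends_kabs, ← evalL_toL, htaylor, hv.map_mul]
    _ ≤ v (toL Fq ξ - α) * max (v (evalL Fq (derivative P) (toL Fq ξ)))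
          (v (φ Fq (P.coeff 2) * (toL Fq ξ - α))) :=
        mul_le_mul_of_nonneg_left (hv.sub_le _ _) (hv.nonneg _)
    _ = _ := by rw [evalL_toL, hv.extends_kabs, hv.map_mul, hv.map_phi]

end QuadraticRoots

section Inseparable

variable {Fq}

lemma polyToK_X {F : Type} [Field F] : polyToK F X = TT F := eval₂_X _ _

lemma kabs_TT : kabs Fq (TT Fq) = Fintype.card Fq := by
  rw [← polyToK_X, kabs_polyToK, polyAbs_of_ne_zero X_ne_zero, natDegree_X, pow_one]

lemma kabs_sq_add_TT_mul_sq (x y : K Fq) :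
    kabs Fq (x ^ 2 + TT Fq * y ^ 2) = max (kabs Fq x ^ 2) (Fintype.card Fq * kabs Fq y ^ 2) := by
  rw [← kabs_TT, ← kabs_pow, ← kabs_pow, ← kabs_mul]
  rcases eq_or_ne x 0 with rfl | hx
  · rw [zero_pow two_ne_zero, zero_add, kabs_zero, max_eq_right (kabs_nonneg _)]
  rcases eq_or_ne y 0 with rfl | hy
  · rw [zero_pow two_ne_zero, mul_zero, add_zero, kabs_zero, max_eq_left (kabs_nonneg _)]
  refine IsNonarchimedean.add_eq_max_of_ne (f := seriesAbs Fq) (isNonarchimedean_kabs Fq) ?_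
  -- the two orders have different parities
  change kabs Fq (x ^ 2) ≠ kabs Fq (TT Fq * y ^ 2)
  rw [kabs_mul, kabs_TT, kabs_pow, kabs_pow, kabs_of_ne_zero hx, kabs_of_ne_zero hy,
    ← zpow_natCast, ← zpow_natCast, ← zpow_mul, ← zpow_mul,
    ← zpow_one_add₀ (one_pos.trans one_lt_card).ne']
  intro heq
  have := zpow_right_injective₀ (one_pos.trans one_lt_card) one_lt_card.ne' heq
  push_cast at this
  lia

lemma polyAbs_sq_le_polyAbs_sq_add_X_mul_sq (E F : Fq[X]) :
    polyAbs Fq E ^ 2 ≤ polyAbs Fq (E ^ 2 + X * F ^ 2) ∧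
      polyAbs Fq F ^ 2 ≤ polyAbs Fq (E ^ 2 + X * F ^ 2) := by
  have hmax := kabs_sq_add_TT_mul_sq (polyToK Fq E) (polyToK Fq F)
  rw [← polyToK_X, ← map_pow, ← map_pow, ← map_mul, ← map_add] at hmax
  simp only [← kabs_polyToK, hmax]
  exact ⟨le_max_left _ _, le_max_of_le_right
    (le_mul_of_one_le_left (sq_nonneg _) one_lt_card.le)⟩

lemma Hpoly_C_mul_X_add_C (A B : Fq[X]) :
    Hpoly Fq (C A * X + C B) = max (polyAbs Fq A) (polyAbs Fq B) := by
  refine le_antisymm (Hpoly_le fun i => ?_) (max_le ?_ ?_)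
  · rcases i with _ | _ | i
    · simp
    · simp [coeff_C]
    · simp
  · have hcoeff : (C A * X + C B : Fq[X][X]).coeff 1 = A := by simp [coeff_C]
    exact (congrArg (polyAbs Fq) hcoeff).symm.trans_le (polyAbs_coeff_le_Hpoly _ 1)
  · have hcoeff : (C A * X + C B : Fq[X][X]).coeff 0 = B := by simp
    exact (congrArg (polyAbs Fq) hcoeff).symm.trans_le (polyAbs_coeff_le_Hpoly _ 0)

lemma exists_eq_sq_add_C_X_mul_sq [CharP Fq 2] {P : Fq[X][X]} (hP : P.natDegree ≤ 2)
    (h1 : P.coeff 1 = 0) : ∃ Q R : Fq[X][X], P = Q ^ 2 + C X * R ^ 2 ∧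
      (Q.natDegree ≤ 1 ∧ Hpoly Fq Q ^ 2 ≤ Hpoly Fq P) ∧
      (R.natDegree ≤ 1 ∧ Hpoly Fq R ^ 2 ≤ Hpoly Fq P) := by
  obtain ⟨E, F, hEF⟩ := exists_eq_sq_add_X_mul_sq (P.coeff 2)
  obtain ⟨E', F', hEF'⟩ := exists_eq_sq_add_X_mul_sq (P.coeff 0)
  have hsq {A B : Fq[X]} (hA : polyAbs Fq A ^ 2 ≤ polyAbs Fq (P.coeff 2))
      (hB : polyAbs Fq B ^ 2 ≤ polyAbs Fq (P.coeff 0)) :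
      Hpoly Fq (C A * X + C B) ^ 2 ≤ Hpoly Fq P := by
    rw [Hpoly_C_mul_X_add_C]
    rcases max_choice (polyAbs Fq A) (polyAbs Fq B) with h | h <;> rw [h]
    · exact hA.trans (polyAbs_coeff_le_Hpoly P 2)
    · exact hB.trans (polyAbs_coeff_le_Hpoly P 0)
  have h2 := polyAbs_sq_le_polyAbs_sq_add_X_mul_sq E F
  have h0 := polyAbs_sq_le_polyAbs_sq_add_X_mul_sq E' F'
  rw [← hEF] at h2
  rw [← hEF'] at h0
  refine ⟨C E * X + C E', C F * X + C F', ?_, ⟨natDegree_linear_le, hsq h2.1 h0.1⟩,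
    natDegree_linear_le, hsq h2.2 h0.2⟩
  rw [eq_quadratic_of_degree_le_two (natDegree_le_iff_degree_le.1 hP), h1, hEF, hEF',
    CharTwo.add_sq, CharTwo.add_sq]
  simp only [C_add, C_mul, C_pow, C_0]
  ring

lemma mul_Hpoly_rpow_neg_le_of_coeff_one_eq_zero [CharP Fq 2] {ξ : K Fq} {s c : ℝ} (hs : 0 ≤ s)
    (hc : 0 < c) (h : ∀ Q : Fq[X][X], Q.natDegree ≤ 1 → evalK Fq Q ξ ≠ 0 →
      c * Hpoly Fq Q ^ (-s) ≤ kabs Fq (evalK Fq Q ξ))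
    {P : Fq[X][X]} (hP : P.natDegree ≤ 2) (h1 : P.coeff 1 = 0) (hPξ : evalK Fq P ξ ≠ 0) :
    c ^ 2 * Hpoly Fq P ^ (-s) ≤ kabs Fq (evalK Fq P ξ) := by
  obtain ⟨Q, R, hPQR, hQ, hR⟩ := exists_eq_sq_add_C_X_mul_sq hP h1
  have heval : evalK Fq P ξ = evalK Fq Q ξ ^ 2 + TT Fq * evalK Fq R ξ ^ 2 := by
    simp only [hPQR, evalK, eval₂_add, eval₂_mul, eval₂_pow, eval₂_C, polyToK_X]
  have hkabs := kabs_sq_add_TT_mul_sq (evalK Fq Q ξ) (evalK Fq R ξ)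
  rw [← heval] at hkabs
  have hmain {Z : Fq[X][X]} (hZ : Z.natDegree ≤ 1 ∧ Hpoly Fq Z ^ 2 ≤ Hpoly Fq P)
      (hZξ : evalK Fq Z ξ ≠ 0) :
      c ^ 2 * Hpoly Fq P ^ (-s) ≤ kabs Fq (evalK Fq Z ξ) ^ 2 := by
    have hHZ : 0 < Hpoly Fq Z := one_pos.trans_le (one_le_Hpoly (ne_zero_of_evalK_ne_zero hZξ))
    calc c ^ 2 * Hpoly Fq P ^ (-s) ≤ c ^ 2 * (Hpoly Fq Z ^ 2) ^ (-s) := by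
          gcongr 1
          exact Real.rpow_le_rpow_of_nonpos (by positivity) hZ.2 (neg_nonpos.2 hs)
      _ = (c * Hpoly Fq Z ^ (-s)) ^ 2 := by rw [← Real.rpow_pow_comm hHZ.le, mul_pow]
      _ ≤ kabs Fq (evalK Fq Z ξ) ^ 2 :=
          pow_le_pow_left₀ (by positivity) (h Z hZ.1 hZξ) 2
  by_cases hQξ : evalK Fq Q ξ = 0
  · have hRξ : evalK Fq R ξ ≠ 0 := fun hRξ => hPξ (by simp [heval, hQξ, hRξ])
    refine (hmain hR hRξ).trans (hkabs ▸ le_max_of_le_right ?_)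
    exact le_mul_of_one_le_left (sq_nonneg _) one_lt_card.le
  · exact (hmain hQ hQξ).trans (hkabs ▸ le_max_left _ _)

end Inseparable

section Comparison

variable {Fq}

lemma polyAbs_X_pow (m : ℕ) : polyAbs Fq (X ^ m) = Fintype.card Fq ^ m := by
  rw [polyAbs_of_ne_zero (pow_ne_zero m X_ne_zero), natDegree_X_pow]

lemma kabs_inv_TT_pow (m : ℕ) : kabs Fq ((TT Fq)⁻¹ ^ m) = (Fintype.card Fq ^ m : ℝ)⁻¹ := by
  rw [kabs_pow, kabs_inv, kabs_TT, inv_pow]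

lemma degAlg_heightAlg_inv_TT_pow (m : ℕ) : IsAlgElem Fq (toL Fq ((TT Fq)⁻¹ ^ m)) ∧
    degAlg Fq (toL Fq ((TT Fq)⁻¹ ^ m)) = 1 ∧
    heightAlg Fq (toL Fq ((TT Fq)⁻¹ ^ m)) = Fintype.card Fq ^ m := by
  have hTT : TT Fq ≠ 0 := by
    rw [← kabs_pos, kabs_TT]
    exact one_pos.trans one_lt_card
  have hdeg : (C (X ^ m) * X + C (-1) : Fq[X][X]).degree = 1 :=
    degree_linear (pow_ne_zero m X_ne_zero)
  have hnat : (C (X ^ m) * X + C (-1) : Fq[X][X]).natDegree = 1 :=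
    natDegree_eq_of_degree_eq_some hdeg
  have hirr : Irreducible (C (X ^ m) * X + C (-1) : Fq[X][X]) := by
    refine irreducible_of_degree_eq_one_of_isRelPrime_coeff hdeg ?_
    have hcoeff : (C (X ^ m) * X + C (-1) : Fq[X][X]).coeff 0 = -1 := by simp
    rw [hcoeff]
    exact isRelPrime_one_left.neg_left
  have hroot : evalL Fq (C (X ^ m) * X + C (-1)) (toL Fq ((TT Fq)⁻¹ ^ m)) = 0 := by
    rw [evalL_toL_eq_zero, evalK, eval₂_add, eval₂_mul, eval₂_C, eval₂_X, eval₂_C, map_pow,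
      polyToK_X, ← mul_pow, mul_inv_cancel₀ hTT, one_pow, map_neg, map_one, add_neg_cancel]
  have hne := hnat.trans_ne one_ne_zero
  refine ⟨isAlgElem_of_irreducible hirr hne hroot,
    (degAlg_of_irreducible hirr hne hroot).trans hnat, ?_⟩
  rw [heightAlg_of_irreducible hirr hne hroot, Hpoly_C_mul_X_add_C, polyAbs_X_pow,
    polyAbs_of_isUnit isUnit_one.neg]
  exact max_eq_left (one_le_pow₀ one_lt_card.le)

variable {v : L Fq → ℝ} {n : ℕ} {ξ : K Fq} {s : ℝ}

lemma PolyBound.neg_one_le (h : PolyBound n ξ s) : -1 ≤ s := by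
  obtain ⟨c, hc, h⟩ := h
  have hle : -s - 1 ≤ 0 := by
    refine nonpos_of_eventually_mul_rpow_le (one_lt_card (Fq := Fq)) hc (B := 1)
      (.of_forall fun m => ?_)
    have hm := h (C (X ^ m)) (by simp) (by
      rw [evalK_C, Ne, map_eq_zero_iff _ polyToK_injective]
      exact pow_ne_zero m X_ne_zero)
    have hq : (0 : ℝ) < Fintype.card Fq ^ m := pow_pos (one_pos.trans one_lt_card) m
    rw [Hpoly_C, evalK_C, kabs_polyToK, polyAbs_X_pow] at hm
    rwa [Real.rpow_sub_one hq.ne', ← mul_div_assoc, div_le_one₀ hq]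
  linarith

lemma AlgBound.eventually_le_kabs_sub (hv : IsAbsExt Fq v) (hn : 1 ≤ n) (h : AlgBound v n ξ s) :
    ∃ c : ℝ, 0 < c ∧ ∀ᶠ m : ℕ in atTop,
      c * (Fintype.card Fq ^ m : ℝ) ^ (-s - 1) ≤ kabs Fq (ξ - (TT Fq)⁻¹ ^ m) := by
  obtain ⟨c, hc, h⟩ := h
  have hinj : Function.Injective fun m : ℕ => (TT Fq)⁻¹ ^ m := fun m m' hmm' => by
    have hkabs := congrArg (kabs Fq) hmm'
    simp only [kabs_inv_TT_pow, inv_inj] at hkabs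
    exact pow_right_injective₀ (one_pos.trans one_lt_card) one_lt_card.ne' hkabs
  have hev : ∀ᶠ m : ℕ in atTop, (TT Fq)⁻¹ ^ m ≠ ξ := by
    rw [← Nat.cofinite_eq_atTop]
    exact hinj.tendsto_cofinite.eventually (eventually_cofinite_ne ξ)
  refine ⟨c, hc, hev.mono fun m hm => ?_⟩
  obtain ⟨halg, hdeg, hheight⟩ := degAlg_heightAlg_inv_TT_pow (Fq := Fq) m
  have hle := h _ halg (hdeg.trans_le hn)
    fun heq => hm ((algebraMap (K Fq) (L Fq)).injective heq).symm
  rwa [hheight, ← map_sub, hv.extends_kabs] at hle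

lemma AlgBound.neg_one_le (hv : IsAbsExt Fq v) (hn : 1 ≤ n) (h : AlgBound v n ξ s) : -1 ≤ s := by
  obtain ⟨c, hc, h⟩ := h.eventually_le_kabs_sub hv hn
  have hle : -s - 1 ≤ 0 := by
    refine nonpos_of_eventually_mul_rpow_le (one_lt_card (Fq := Fq)) hc (B := max (kabs Fq ξ) 1)
      (h.mono fun m hm => hm.trans ((kabs_sub_le _ _).trans (max_le_max le_rfl ?_)))
    rw [kabs_inv_TT_pow]
    exact inv_le_one_of_one_le₀ (one_le_pow₀ one_lt_card.le)
  linarith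

lemma AlgBound.nonneg_of_zero (hv : IsAbsExt Fq v) (hn : 1 ≤ n) (h : AlgBound v n 0 s) :
    0 ≤ s := by
  obtain ⟨c, hc, h⟩ := h.eventually_le_kabs_sub hv hn
  have hle : -s ≤ 0 := by
    refine nonpos_of_eventually_mul_rpow_le (one_lt_card (Fq := Fq)) hc (B := 1)
      (h.mono fun m hm => ?_)
    have hq : (0 : ℝ) < Fintype.card Fq ^ m := pow_pos (one_pos.trans one_lt_card) m
    rw [zero_sub, kabs_neg, kabs_inv_TT_pow, Real.rpow_sub_one hq.ne', ← mul_div_assoc,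
      div_eq_mul_inv] at hm
    exact (mul_le_iff_le_one_left (inv_pos.2 hq)).1 hm
  linarith

lemma finite_evalK_minPolyPrim_eq_zero {F : Type} [Field F] (ξ : K F) :
    {α : L F | IsAlgElem F α ∧ evalK F (minPolyPrim F α) ξ = 0}.Finite := by
  by_cases hξ : IsAlgElem F (toL F ξ)
  · refine (finite_setOfPred_isRoot ((Polynomial.map_ne_zero_iff phi_injective).2
      (minPolyPrim_spec hξ).2.1.ne_zero)).subset fun α ⟨hα, hαξ⟩ => ?_
    obtain ⟨hpos, hirr, -, -, hroot⟩ := minPolyPrim_spec hα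
    have hdvd := (associated_minPolyPrim hirr hpos.ne' (evalL_toL_eq_zero.2 hαξ)).dvd
    exact (eval_map _ _).trans (eval₂_eq_zero_of_dvd_of_eval₂_eq_zero _ _ hdvd hroot)
  · refine Set.finite_empty.subset fun α ⟨hα, hαξ⟩ => hξ ?_
    obtain ⟨hpos, hirr, -⟩ := minPolyPrim_spec hα
    exact isAlgElem_of_irreducible hirr hpos.ne' (evalL_toL_eq_zero.2 hαξ)

lemma wStarExp_le_of_polyBound (hv : IsAbsExt Fq v) (h : PolyBound n ξ s) :
    wStarExp Fq v n ξ ≤ s := by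
  have hs := h.neg_one_le
  obtain ⟨c, hc, h⟩ := h
  let M := max (kabs Fq ξ) 1 ^ n
  have hM : 0 < M := pow_pos (lt_max_of_lt_right one_pos) n
  refine wStarExp_le_of_forall_notMem hv (finite_evalK_minPolyPrim_eq_zero ξ)
    (c := min (c / M) 1) (lt_min (div_pos hc hM) one_pos) fun α hα hdeg _ hαξ => ?_
  have hheight := one_le_heightAlg hα
  have hheight0 : 0 < heightAlg Fq α := one_pos.trans_le hheight
  rcases le_total (v (toL Fq ξ - α)) 1 with hle | hge
  · refine (mul_le_mul_of_nonneg_right (min_le_left _ _) (by positivity)).trans ?_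
    rw [div_mul_eq_mul_div, div_le_iff₀ hM, Real.rpow_sub_one hheight0.ne', ← mul_div_assoc,
      div_le_iff₀ hheight0]
    calc c * heightAlg Fq α ^ (-s) ≤ kabs Fq (evalK Fq (minPolyPrim Fq α) ξ) :=
          h _ hdeg fun hξ => hαξ ⟨hα, hξ⟩
      _ ≤ v (toL Fq ξ - α) * (heightAlg Fq α * max (kabs Fq ξ) 1 ^ degAlg Fq α) :=
          hv.kabs_evalK_le (minPolyPrim_spec hα).2.2.2.2 hle
      _ ≤ v (toL Fq ξ - α) * (heightAlg Fq α * M) := by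
          have := hv.nonneg (toL Fq ξ - α)
          gcongr
          exact pow_le_pow_right₀ (le_max_right _ _) hdeg
      _ = v (toL Fq ξ - α) * M * heightAlg Fq α := by ring
  · calc min (c / M) 1 * heightAlg Fq α ^ (-s - 1) ≤ 1 * 1 := by
          gcongr
          · exact min_le_right _ _
          · exact Real.rpow_le_one_of_one_le_of_nonpos hheight (by linarith)
      _ ≤ v (toL Fq ξ - α) := by rwa [one_mul]

lemma wStarExp_le_wExp (hv : IsAbsExt Fq v) (n : ℕ) (ξ : K Fq) :
    wStarExp Fq v n ξ ≤ wExp Fq n ξ :=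
  EReal.le_of_forall_lt_iff_le.1 fun _ hs => wStarExp_le_of_polyBound hv (polyBound_of_wExp_lt hs)

lemma exists_root_le_of_natDegree_eq_one (hv : IsAbsExt Fq v) {P : Fq[X][X]}
    (hP : P.natDegree = 1) (ξ : K Fq) :
    ∃ α, evalL Fq P α = 0 ∧ v (toL Fq ξ - α) ≤ kabs Fq (evalK Fq P ξ) := by
  obtain ⟨α, hα⟩ := exists_evalL_eq_zero (hP.trans_ne one_ne_zero)
  refine ⟨α, hα, ?_⟩
  have hlead : P.coeff 1 ≠ 0 := by
    rw [← hP]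
    exact leadingCoeff_ne_zero.2 (ne_zero_of_natDegree_gt (n := 0) (by lia))
  have heval : evalL Fq P (toL Fq ξ) = φ Fq (P.coeff 1) * (toL Fq ξ - α) := by
    rw [← sub_zero (evalL Fq P (toL Fq ξ)), ← hα, eq_X_add_C_of_natDegree_le_one hP.le]
    simp only [evalL, eval₂_add, eval₂_mul, eval₂_C, eval₂_X]
    simp only [add_sub_add_right_eq_sub, coeff_add, coeff_mul_X, coeff_C_zero, coeff_C_succ,
      add_zero]
    ring
  rw [← hv.extends_kabs, ← evalL_toL, heval, hv.map_mul, hv.map_phi]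
  exact le_mul_of_one_le_left (hv.nonneg _) (one_le_polyAbs hlead)

lemma le_kabs_evalK_of_root {c : ℝ}
    (h : ∀ α : L Fq, IsAlgElem Fq α → degAlg Fq α ≤ n → toL Fq ξ ≠ α →
      c * heightAlg Fq α ^ (-s - 1) ≤ v (toL Fq ξ - α)) {P : Fq[X][X]} (hP : Irreducible P)
    (hPn : P.natDegree ≤ n) (hP0 : P.natDegree ≠ 0) (hPξ : evalK Fq P ξ ≠ 0) {α : L Fq}
    (hα : evalL Fq P α = 0) (hle : v (toL Fq ξ - α) ≤ kabs Fq (evalK Fq P ξ)) :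
    c * Hpoly Fq P ^ (-(s + 1)) ≤ kabs Fq (evalK Fq P ξ) := by
  rw [← heightAlg_of_irreducible hP hP0 hα, neg_add']
  refine (h α (isAlgElem_of_irreducible hP hP0 hα)
    ((degAlg_of_irreducible hP hP0 hα).trans_le hPn) ?_).trans hle
  rintro rfl
  exact hPξ (evalL_toL_eq_zero.1 hα)

lemma AlgBound.mono {m : ℕ} (hmn : m ≤ n) (h : AlgBound v n ξ s) : AlgBound v m ξ s :=
  let ⟨c, hc, h⟩ := h
  ⟨c, hc, fun α hα hdeg => h α hα (hdeg.trans hmn)⟩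

lemma AlgBound.polyBound_one (hv : IsAbsExt Fq v) (h : AlgBound v 1 ξ s) :
    PolyBound 1 ξ (s + 1) := by
  have hs := h.neg_one_le hv le_rfl
  obtain ⟨c, hc, h⟩ := h
  refine polyBound_of_irreducible (by linarith) hc fun P hP1 hP0 hP hPξ => ?_
  obtain ⟨α, hα, hle⟩ := exists_root_le_of_natDegree_eq_one hv (by lia : P.natDegree = 1) ξ
  exact le_kabs_evalK_of_root h hP hP1 hP0 hPξ hα hle

-- Only inseparable quadratic polynomials have no root `α` with `|ξ - α| ≤ |P(ξ)|`; being additive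
-- squares up to a factor `T`, they are controlled by linear polynomials.
lemma AlgBound.polyBound_two (hv : IsAbsExt Fq v) (h : AlgBound v 2 ξ s) :
    PolyBound 2 ξ (s + 1) := by
  have hs := h.neg_one_le hv one_le_two
  obtain ⟨c₁, hc₁, h₁⟩ := (h.mono one_le_two).polyBound_one hv
  obtain ⟨c, hc, h⟩ := h
  refine polyBound_of_irreducible (by linarith) (c := min c₁ (min c (c₁ ^ 2))) (by positivity)
    fun P hP2 hP0 hP hPξ => ?_
  have hmono {c' : ℝ} (hc' : min c₁ (min c (c₁ ^ 2)) ≤ c')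
      (hle : c' * Hpoly Fq P ^ (-(s + 1)) ≤ kabs Fq (evalK Fq P ξ)) :
      min c₁ (min c (c₁ ^ 2)) * Hpoly Fq P ^ (-(s + 1)) ≤ kabs Fq (evalK Fq P ξ) :=
    (mul_le_mul_of_nonneg_right hc' (Real.rpow_nonneg (Hpoly_nonneg P) _)).trans hle
  rcases hP2.lt_or_eq with hP1 | hP2
  · exact hmono (min_le_left _ _) (h₁ P (Nat.le_of_lt_succ hP1) hPξ)
  by_cases hdisc : discrim (P.coeff 2) (P.coeff 1) (P.coeff 0) = 0
  · have h2 : (2 : Fq[X]) = 0 := two_eq_zero_of_discrim_eq_zero hP hP2 hdisc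
    have h2' : (2 : Fq) = 0 := C_injective (by rwa [map_ofNat, C_0])
    have : CharP Fq 2 := CharTwo.of_one_ne_zero_of_two_eq_zero one_ne_zero h2'
    have hcoeff : P.coeff 1 = 0 := by
      rw [discrim, show (4 : Fq[X]) = 2 * 2 by norm_num, h2] at hdisc
      simpa using hdisc
    exact hmono (by simp) (mul_Hpoly_rpow_neg_le_of_coeff_one_eq_zero (by linarith) hc₁ h₁
      hP2.le hcoeff hPξ)
  · obtain ⟨α, hα, hle⟩ := exists_root_le_of_discrim_ne_zero hv hP2 hdisc ξ
    exact hmono (by simp) (le_kabs_evalK_of_root h hP hP2.le hP0 hPξ hα hle)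

lemma wExp_two_le_wStarExp_two_add_one (hv : IsAbsExt Fq v) (ξ : K Fq) :
    wExp Fq 2 ξ ≤ wStarExp Fq v 2 ξ + 1 := by
  refine EReal.le_of_forall_lt_iff_le.1 fun s hs => ?_
  have hlt : wStarExp Fq v 2 ξ < ((s - 1 : ℝ) : EReal) := by
    rw [EReal.coe_sub]
    exact (EReal.lt_sub_iff_add_lt (Or.inl (EReal.coe_ne_bot 1))
      (Or.inl (EReal.coe_ne_top 1))).2 hs
  simpa using wExp_le_of_polyBound ((algBound_of_wStarExp_lt hv hlt).polyBound_two hv)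

lemma polyBound_zero (n : ℕ) : PolyBound n (0 : K Fq) 0 := by
  refine ⟨1, one_pos, fun P _ hP => ?_⟩
  rw [evalK, eval₂_at_zero, Ne, map_eq_zero_iff _ polyToK_injective] at hP
  rw [evalK, eval₂_at_zero, kabs_polyToK, neg_zero, Real.rpow_zero, one_mul]
  exact one_le_polyAbs hP

lemma wExp_zero (hv : IsAbsExt Fq v) (hn : 1 ≤ n) :
    wExp Fq n (0 : K Fq) = 0 ∧ wStarExp Fq v n (0 : K Fq) = 0 := by
  have hw : wExp Fq n (0 : K Fq) ≤ 0 := wExp_le_of_polyBound (polyBound_zero n)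
  have hstar : 0 ≤ wStarExp Fq v n (0 : K Fq) := EReal.le_of_forall_lt_iff_le.1 fun s hs =>
    EReal.coe_nonneg.2 ((algBound_of_wStarExp_lt hv hs).nonneg_of_zero hv hn)
  have hle := wStarExp_le_wExp hv n (0 : K Fq)
  exact ⟨hw.antisymm (hstar.trans hle), (hle.trans hw).antisymm hstar⟩

end Comparison

section Limits

variable {Fq}

lemma kabs_le_inv_pow_iff {f : K Fq} {N : ℕ} :
    kabs Fq f ≤ ((Fintype.card Fq : ℝ) ^ N)⁻¹ ↔ ∀ m : ℤ, m < N → f.coeff m = 0 := by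
  rcases eq_or_ne f 0 with rfl | hf
  · simpa only [kabs_zero, HahnSeries.coeff_zero, implies_true, iff_true] using by positivity
  rw [kabs_of_ne_zero hf, ← zpow_natCast, ← zpow_neg, zpow_le_zpow_iff_right₀ one_lt_card,
    neg_le_neg_iff]
  refine ⟨fun h m hm => HahnSeries.coeff_eq_zero_of_lt_order (hm.trans_le h), fun h => ?_⟩
  by_contra! hlt
  exact HahnSeries.coeff_order_eq_zero.not.2 hf (h _ hlt)

lemma coeff_eq_of_kabs_succ_sub_le {x : ℕ → K Fq} {d : ℕ → ℕ} (hd : Monotone d)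
    (hx : ∀ i, kabs Fq (x (i + 1) - x i) ≤ ((Fintype.card Fq : ℝ) ^ d i)⁻¹)
    {i j : ℕ} (hij : i ≤ j) {m : ℤ} (hm : m < d i) : (x j).coeff m = (x i).coeff m := by
  induction j, hij using Nat.le_induction with
  | base => rfl
  | succ j hij ih =>
    have hsub := kabs_le_inv_pow_iff.1 (hx j) m (hm.trans_le (mod_cast hd hij))
    rw [HahnSeries.coeff_sub, sub_eq_zero] at hsub
    rw [hsub, ih]

lemma exists_kabs_sub_le {x : ℕ → K Fq} {d : ℕ → ℕ} (hd : StrictMono d)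
    (hx : ∀ i, kabs Fq (x (i + 1) - x i) ≤ ((Fintype.card Fq : ℝ) ^ d i)⁻¹) :
    ∃ ξ : K Fq, ∀ i, kabs Fq (ξ - x i) ≤ ((Fintype.card Fq : ℝ) ^ d i)⁻¹ := by
  have hbdd : BddBelow (Function.support fun m : ℤ => (x (m.toNat + 1)).coeff m) := by
    refine ⟨min 0 (x 1).order, mem_lowerBounds.2 fun m hm => ?_⟩
    by_contra! hlt
    rw [Function.mem_support, Int.toNat_of_nonpos (by lia)] at hm
    exact hm (HahnSeries.coeff_eq_zero_of_lt_order (by lia))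
  refine ⟨HahnSeries.ofSuppBddBelow _ hbdd, fun i => ?_⟩
  refine kabs_le_inv_pow_iff.2 fun m hm => ?_
  rw [HahnSeries.coeff_sub, HahnSeries.coeff_ofSuppBddBelow, sub_eq_zero]
  rcases le_total i (m.toNat + 1) with hi | hi
  · exact coeff_eq_of_kabs_succ_sub_le hd.monotone hx hi hm
  · have hmd : m < d (m.toNat + 1) := by
      have := hd.le_apply (x := m.toNat + 1)
      lia
    exact (coeff_eq_of_kabs_succ_sub_le hd.monotone hx hi hmd).symm

end Limits

section ContinuedFractions

lemma qSeq_mul_pSeq_sub {F : Type} [Field F] (a : ℕ → F[X]) (i : ℕ) :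
    qSeq F a (i + 1) * pSeq F a i - pSeq F a (i + 1) * qSeq F a i = (-1) ^ i := by
  induction i with
  | zero => simp [qSeq, pSeq]
  | succ i ih =>
    rw [qSeq, pSeq, pow_succ, ← ih]
    ring

lemma degree_qSeq_lt {F : Type} [Field F] {a : ℕ → F[X]} (ha : ∀ n, 1 ≤ n → 1 ≤ (a n).natDegree)
    (i : ℕ) : (qSeq F a i).degree < (qSeq F a (i + 1)).degree := by
  induction i with
  | zero => simp [qSeq]
  | succ i ih =>
    have hlt : (qSeq F a (i + 1)).degree < (a (i + 1) * qSeq F a (i + 1)).degree := by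
      have hai := ha (i + 1) (by lia)
      rw [degree_mul, degree_eq_natDegree (ne_zero_of_degree_gt ih),
        degree_eq_natDegree (ne_zero_of_natDegree_gt hai)]
      exact_mod_cast (by lia)
    rw [qSeq, degree_add_eq_left_of_degree_lt (ih.trans hlt)]
    exact hlt

lemma qSeq_succ_ne_zero {F : Type} [Field F] {a : ℕ → F[X]}
    (ha : ∀ n, 1 ≤ n → 1 ≤ (a n).natDegree) (i : ℕ) : qSeq F a (i + 1) ≠ 0 :=
  ne_zero_of_degree_gt (degree_qSeq_lt ha i)

lemma natDegree_qSeq_add_two {F : Type} [Field F] {a : ℕ → F[X]}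
    (ha : ∀ n, 1 ≤ n → 1 ≤ (a n).natDegree) (i : ℕ) :
    (qSeq F a (i + 2)).natDegree = (a (i + 1)).natDegree + (qSeq F a (i + 1)).natDegree := by
  have ha0 : a (i + 1) ≠ 0 := ne_zero_of_natDegree_gt (ha (i + 1) (by lia))
  rw [← natDegree_mul ha0 (qSeq_succ_ne_zero ha i), qSeq]
  refine natDegree_add_eq_left_of_degree_lt ((degree_qSeq_lt ha i).trans_le ?_)
  rw [mul_comm]
  exact degree_le_mul_left _ ha0

lemma natDegree_qSeq_strictMono {F : Type} [Field F] {a : ℕ → F[X]}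
    (ha : ∀ n, 1 ≤ n → 1 ≤ (a n).natDegree) :
    StrictMono fun i => (qSeq F a (i + 1)).natDegree :=
  strictMono_nat_of_lt_succ fun i => by
    rw [natDegree_qSeq_add_two ha]
    have := ha (i + 1) (by lia)
    lia

variable {Fq} {a : ℕ → Fq[X]} {ξ : K Fq}

lemma polyAbs_qSeq_add_two (ha : ∀ n, 1 ≤ n → 1 ≤ (a n).natDegree) (i : ℕ) :
    polyAbs Fq (qSeq Fq a (i + 2)) = polyAbs Fq (a (i + 1)) * polyAbs Fq (qSeq Fq a (i + 1)) := by
  rw [polyAbs_of_ne_zero (qSeq_succ_ne_zero ha (i + 1)), natDegree_qSeq_add_two ha, pow_add,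
    polyAbs_of_ne_zero (qSeq_succ_ne_zero ha i),
    polyAbs_of_ne_zero (ne_zero_of_natDegree_gt (ha (i + 1) (by lia)))]

lemma polyAbs_qSeq_lt (ha : ∀ n, 1 ≤ n → 1 ≤ (a n).natDegree) (i : ℕ) :
    polyAbs Fq (qSeq Fq a i) < polyAbs Fq (qSeq Fq a (i + 1)) := by
  rcases i with _ | i
  · simp [qSeq]
  rw [polyAbs_of_ne_zero (qSeq_succ_ne_zero ha i),
    polyAbs_of_ne_zero (qSeq_succ_ne_zero ha (i + 1))]
  exact pow_lt_pow_right₀ one_lt_card (natDegree_qSeq_strictMono ha (Nat.lt_succ_self i))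

lemma kabs_convergent_sub (ha : ∀ n, 1 ≤ n → 1 ≤ (a n).natDegree) (i : ℕ) :
    kabs Fq (polyToK Fq (pSeq Fq a (i + 2)) / polyToK Fq (qSeq Fq a (i + 2)) -
        polyToK Fq (pSeq Fq a (i + 1)) / polyToK Fq (qSeq Fq a (i + 1))) =
      (polyAbs Fq (qSeq Fq a (i + 1)) * polyAbs Fq (qSeq Fq a (i + 2)))⁻¹ := by
  have hq (j : ℕ) : polyToK Fq (qSeq Fq a (j + 1)) ≠ 0 :=
    (map_ne_zero_iff _ polyToK_injective).2 (qSeq_succ_ne_zero ha j)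
  have hdet := congrArg (polyToK Fq) (qSeq_mul_pSeq_sub a (i + 1))
  simp only [map_sub, map_mul, map_pow, map_neg, map_one] at hdet
  have hdiff : polyToK Fq (pSeq Fq a (i + 2)) / polyToK Fq (qSeq Fq a (i + 2)) -
      polyToK Fq (pSeq Fq a (i + 1)) / polyToK Fq (qSeq Fq a (i + 1)) =
      -((-1) ^ (i + 1) / (polyToK Fq (qSeq Fq a (i + 1)) * polyToK Fq (qSeq Fq a (i + 2)))) := by
    have := hq i
    have := hq (i + 1)
    rw [← hdet]
    field_simp
    ring
  rw [hdiff, div_eq_mul_inv, kabs_neg, kabs_mul, kabs_pow, kabs_neg, kabs_one, one_pow, one_mul,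
    kabs_inv, kabs_mul, kabs_polyToK, kabs_polyToK]

lemma exists_isCFOf (ha : ∀ n, 1 ≤ n → 1 ≤ (a n).natDegree) : ∃ ξ : K Fq, IsCFOf Fq ξ a := by
  set x : ℕ → K Fq := fun i =>
    polyToK Fq (pSeq Fq a (i + 1)) / polyToK Fq (qSeq Fq a (i + 1))
  set d : ℕ → ℕ := fun i =>
    (qSeq Fq a (i + 1)).natDegree + (qSeq Fq a (i + 2)).natDegree
  have hmono : StrictMono d := (natDegree_qSeq_strictMono ha).add
    fun i j hij => natDegree_qSeq_strictMono ha (Nat.succ_lt_succ hij)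
  have hdiff (i : ℕ) : kabs Fq (x (i + 1) - x i) = ((Fintype.card Fq : ℝ) ^ d i)⁻¹ := by
    rw [pow_add, ← polyAbs_of_ne_zero (qSeq_succ_ne_zero ha i),
      ← polyAbs_of_ne_zero (qSeq_succ_ne_zero ha (i + 1))]
    exact kabs_convergent_sub ha i
  obtain ⟨ξ, hξ⟩ := exists_kabs_sub_le hmono fun i => (hdiff i).le
  refine ⟨ξ, ha, fun i => ?_⟩
  have hlt : kabs Fq (ξ - x (i + 1)) < kabs Fq (x (i + 1) - x i) := by
    rw [hdiff]
    refine (hξ (i + 1)).trans_lt (inv_strictAnti₀ (pow_pos (one_pos.trans one_lt_card) _) ?_)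
    exact pow_lt_pow_right₀ one_lt_card (hmono (Nat.lt_succ_self i))
  rw [kabs_polyToK, kabs_polyToK, ← kabs_convergent_sub ha i, ← kabs_add_eq_left hlt]
  congr 1
  ring

lemma IsCFOf.kabs_mul_sub (h : IsCFOf Fq ξ a) (i : ℕ) :
    kabs Fq (polyToK Fq (qSeq Fq a i) * ξ - polyToK Fq (pSeq Fq a i)) =
      (polyAbs Fq (qSeq Fq a (i + 1)))⁻¹ := by
  rcases i with _ | i
  · simp [qSeq, pSeq, kabs_neg, kabs_one]
  have hq : polyToK Fq (qSeq Fq a (i + 1)) ≠ 0 :=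
    (map_ne_zero_iff _ polyToK_injective).2 (qSeq_succ_ne_zero h.1 i)
  rw [← mul_div_cancel₀ (polyToK Fq (pSeq Fq a (i + 1))) hq, ← mul_sub, kabs_mul, h.2, mul_inv,
    mul_inv_cancel_left₀ (kabs_pos.2 hq).ne', kabs_polyToK]

lemma IsCFOf.kabs_le_one (h : IsCFOf Fq ξ a) (h0 : a 0 = 0) : kabs Fq ξ ≤ 1 := by
  have hone := h.kabs_mul_sub 1
  simp only [qSeq, pSeq, h0, map_one, map_zero, one_mul, sub_zero] at hone
  exact hone.trans_le (inv_le_one_of_one_le₀ (one_le_polyAbs (qSeq_succ_ne_zero h.1 1)))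

lemma IsCFOf.polyAbs_pSeq_le (h : IsCFOf Fq ξ a) (h0 : a 0 = 0) (i : ℕ) :
    polyAbs Fq (pSeq Fq a (i + 1)) ≤ polyAbs Fq (qSeq Fq a (i + 1)) := by
  have hsub := kabs_sub_le (polyToK Fq (qSeq Fq a (i + 1)) * ξ)
    (polyToK Fq (qSeq Fq a (i + 1)) * ξ - polyToK Fq (pSeq Fq a (i + 1)))
  rw [sub_sub_cancel, h.kabs_mul_sub, kabs_mul] at hsub
  refine hsub.trans (max_le (mul_le_of_le_one_right (kabs_nonneg _) (h.kabs_le_one h0)) ?_)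
  exact (inv_le_one_of_one_le₀ (one_le_polyAbs (qSeq_succ_ne_zero h.1 _))).trans
    (one_le_polyAbs (qSeq_succ_ne_zero h.1 i))

end ContinuedFractions

section TailForm

/-- The binary quadratic form `y² + rxy - x²`. If `θ = [r; r, r, …]`, so that `θ² = rθ + 1`, then
it vanishes at `(x, y)` whenever `y = -θx`. -/
def tailForm {A : Type*} [CommRing A] (r x y : A) : A := y ^ 2 + r * x * y - x ^ 2

lemma map_tailForm {A B : Type*} [CommRing A] [CommRing B] (g : A →+* B) (r x y : A) :
    g (tailForm r x y) = tailForm (g r) (g x) (g y) := by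
  simp only [tailForm, map_sub, map_add, map_mul, map_pow]

lemma tailForm_mul_add {A : Type*} [CommRing A] (r x y : A) :
    tailForm r (r * x + y) x = -tailForm r x y := by
  unfold tailForm
  ring

lemma abv_sub_lt {A : Type*} [Ring A] {f : AbsoluteValue A ℝ} (hf : IsNonarchimedean f)
    {x y : A} {B : ℝ} (hx : f x < B) (hy : f y < B) : f (x - y) < B := by
  rw [sub_eq_add_neg]
  exact (hf _ _).trans_lt (max_lt hx ((f.map_neg y).trans_lt hy))

lemma abv_tailForm_eq_sq {A : Type*} [CommRing A] [IsDomain A] {f : AbsoluteValue A ℝ}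
    (hf : IsNonarchimedean f) {r x y : A} (hxy : f x < f y) (hrxy : f r * f x < f y) :
    f (tailForm r x y) = f y ^ 2 := by
  have hy : 0 < f y := (f.nonneg x).trans_lt hxy
  rw [tailForm, add_sub_assoc, ← map_pow]
  refine IsNonarchimedean.add_eq_left_of_lt hf (abv_sub_lt hf ?_ ?_)
  · rw [map_mul, map_mul, map_pow, sq]
    exact mul_lt_mul_of_pos_right hrxy hy
  · rw [map_pow, map_pow]
    exact pow_lt_pow_left₀ hxy (f.nonneg x) two_ne_zero

lemma abv_tailForm_eq_mul {A : Type*} [CommRing A] [IsDomain A] {f : AbsoluteValue A ℝ}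
    (hf : IsNonarchimedean f) {r x y : A} (hyx : f y < f r * f x) (hxy : f x < f r * f y) :
    f (tailForm r x y) = f r * f x * f y := by
  have hx : 0 < f x := pos_of_mul_pos_right ((f.nonneg y).trans_lt hyx) (f.nonneg r)
  have hy : 0 < f y := pos_of_mul_pos_right ((f.nonneg x).trans_lt hxy) (f.nonneg r)
  have hsplit : tailForm r x y = r * x * y + (y ^ 2 - x ^ 2) := by
    unfold tailForm
    ring
  rw [hsplit, ← map_mul, ← map_mul]
  refine IsNonarchimedean.add_eq_left_of_lt hf (abv_sub_lt hf ?_ ?_) <;>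
    rw [map_pow, map_mul, map_mul, sq]
  · exact mul_lt_mul_of_pos_right hyx hy
  · rw [mul_right_comm]
    exact mul_lt_mul_of_pos_right hxy hx

lemma tailForm_C_mul_X_sub_C {A : Type*} [CommRing A] (r q₁ p₁ q₀ p₀ : A) :
    tailForm (C r) (C q₁ * X - C p₁) (C q₀ * X - C p₀) =
      C (tailForm r q₁ q₀) * X ^ 2 +
        C (2 * q₁ * p₁ - r * (q₁ * p₀ + q₀ * p₁) - 2 * q₀ * p₀) * X + C (tailForm r p₁ p₀) := by
  simp only [tailForm, C_sub, C_add, C_mul, C_pow, C_ofNat]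
  ring

lemma isPrimitive_tailForm {A : Type*} [CommRing A] (r : A) {q₁ p₁ q₀ p₀ : A}
    (hdet : IsUnit (q₁ * p₀ - p₁ * q₀)) :
    (tailForm (C r) (C q₁ * X - C p₁) (C q₀ * X - C p₀)).IsPrimitive := by
  intro d hd
  rw [tailForm_C_mul_X_sub_C, C_dvd_iff_dvd_coeff] at hd
  have hd2 : d ∣ tailForm r q₁ q₀ := by simpa [coeff_X, coeff_C] using hd 2
  have hd1 : d ∣ 2 * q₁ * p₁ - r * (q₁ * p₀ + q₀ * p₁) - 2 * q₀ * p₀ := by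
    simpa [coeff_X, coeff_C] using hd 1
  have hd0 : d ∣ tailForm r p₁ p₀ := by simpa [coeff_X, coeff_C] using hd 0
  refine isUnit_of_dvd_unit ?_ (hdet.pow 2).neg
  have hcomb : -(q₁ * p₀ - p₁ * q₀) ^ 2 = tailForm r q₁ q₀ * p₀ ^ 2 +
      (2 * q₁ * p₁ - r * (q₁ * p₀ + q₀ * p₁) - 2 * q₀ * p₀) * (p₀ * q₀) +
      tailForm r p₁ p₀ * q₀ ^ 2 := by
    unfold tailForm
    ring
  rw [hcomb]
  exact ((hd2.mul_right _).add (hd1.mul_right _)).add (hd0.mul_right _)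

lemma eq_zero_of_tailForm_eq_zero {F : Type} [Field F] {R : F[X]} (hR : R.natDegree ≠ 0)
    {x y : FractionRing F[X]} (h : tailForm (algebraMap F[X] (FractionRing F[X]) R) x y = 0) :
    x = 0 ∧ y = 0 := by
  suffices hx : x = 0 by simpa [tailForm, hx] using h
  by_contra hx
  have hroot : (y / x) ^ 2 + algebraMap F[X] (FractionRing F[X]) R * (y / x) - 1 = 0 := by
    unfold tailForm at h
    field_simp
    linear_combination h
  have hint : IsIntegral F[X] (y / x) := by
    refine ⟨X ^ 2 + C R * X - C 1, by monicity!, ?_⟩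
    simpa using hroot
  obtain ⟨u, hu⟩ := IsIntegrallyClosed.isIntegral_iff.1 hint
  have hunit : u * (u + R) = 1 := by
    refine IsFractionRing.injective F[X] (FractionRing F[X]) ?_
    rw [← hu] at hroot
    rw [map_mul, map_add, map_one]
    linear_combination hroot
  refine hR ?_
  rw [← add_sub_cancel_left u R]
  exact Nat.le_zero.1 ((natDegree_sub_le _ _).trans (max_le
    (natDegree_eq_zero_of_isUnit (.of_mul_eq_one_right _ hunit)).le
    (natDegree_eq_zero_of_isUnit (.of_mul_eq_one _ hunit)).le))

lemma natDegree_tailForm {F : Type} [Field F] {R q₁ p₁ q₀ p₀ : F[X]} (hR : R.natDegree ≠ 0)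
    (hdet : IsUnit (q₁ * p₀ - p₁ * q₀)) :
    (tailForm (C R) (C q₁ * X - C p₁) (C q₀ * X - C p₀)).natDegree = 2 := by
  rw [tailForm_C_mul_X_sub_C]
  refine natDegree_quadratic fun h => hdet.ne_zero ?_
  have hzero := congrArg (algebraMap F[X] (FractionRing F[X])) h
  rw [map_tailForm, map_zero] at hzero
  obtain ⟨h₁, h₀⟩ := eq_zero_of_tailForm_eq_zero hR hzero
  rw [FaithfulSMul.algebraMap_eq_zero_iff] at h₁ h₀
  rw [h₁, h₀, zero_mul, mul_zero, sub_zero]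

lemma irreducible_tailForm {F : Type} [Field F] {R q₁ p₁ q₀ p₀ : F[X]} (hR : R.natDegree ≠ 0)
    (hdet : IsUnit (q₁ * p₀ - p₁ * q₀)) :
    Irreducible (tailForm (C R) (C q₁ * X - C p₁) (C q₀ * X - C p₀)) := by
  set ι := algebraMap F[X] (FractionRing F[X])
  have hdeg := natDegree_tailForm hR hdet
  rw [(isPrimitive_tailForm R hdet).irreducible_iff_irreducible_map_fraction_map
    (K := FractionRing F[X])]
  refine irreducible_of_degree_le_three_of_not_isRoot ?_ fun w hw => ?_
  · rw [natDegree_map_eq_of_injective (IsFractionRing.injective _ _), hdeg]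
    decide
  have hzero : tailForm (ι R) (ι q₁ * w - ι p₁) (ι q₀ * w - ι p₀) = 0 := by
    rw [IsRoot, eval_map, ← coe_eval₂RingHom, map_tailForm] at hw
    simpa only [coe_eval₂RingHom, eval₂_sub, eval₂_mul, eval₂_C, eval₂_X] using hw
  obtain ⟨h₁, h₀⟩ := eq_zero_of_tailForm_eq_zero hR hzero
  refine (hdet.map ι).ne_zero ?_
  rw [map_sub, map_mul, map_mul]
  linear_combination ι q₀ * h₁ - ι q₁ * h₀

end TailForm

section TailPoly

/-- The quadratic polynomial over `F[T]` annihilating the continued fraction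
`[a 0; …, a n, R, R, R, …]`. -/
def tailPoly {F : Type} [Field F] (a : ℕ → F[X]) (R : F[X]) (n : ℕ) : F[X][X] :=
  tailForm (C R) (C (qSeq F a (n + 1)) * X - C (pSeq F a (n + 1)))
    (C (qSeq F a n) * X - C (pSeq F a n))

lemma isUnit_qSeq_mul_pSeq_sub {F : Type} [Field F] (a : ℕ → F[X]) (n : ℕ) :
    IsUnit (qSeq F a (n + 1) * pSeq F a n - pSeq F a (n + 1) * qSeq F a n) := by
  rw [qSeq_mul_pSeq_sub]
  exact isUnit_one.neg.pow n

lemma natDegree_tailPoly {F : Type} [Field F] (a : ℕ → F[X]) {R : F[X]} (hR : R.natDegree ≠ 0)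
    (n : ℕ) : (tailPoly a R n).natDegree = 2 :=
  natDegree_tailForm hR (isUnit_qSeq_mul_pSeq_sub a n)

lemma irreducible_tailPoly {F : Type} [Field F] (a : ℕ → F[X]) {R : F[X]} (hR : R.natDegree ≠ 0)
    (n : ℕ) : Irreducible (tailPoly a R n) :=
  irreducible_tailForm hR (isUnit_qSeq_mul_pSeq_sub a n)

lemma evalK_tailPoly {F : Type} [Field F] (a : ℕ → F[X]) (R : F[X]) (n : ℕ) (ξ : K F) :
    evalK F (tailPoly a R n) ξ = tailForm (polyToK F R)
      (polyToK F (qSeq F a (n + 1)) * ξ - polyToK F (pSeq F a (n + 1)))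
      (polyToK F (qSeq F a n) * ξ - polyToK F (pSeq F a n)) := by
  rw [tailPoly, evalK, ← coe_eval₂RingHom, map_tailForm]
  simp only [coe_eval₂RingHom, eval₂_sub, eval₂_mul, eval₂_C, eval₂_X]

lemma evalK_tailPoly_succ {F : Type} [Field F] {a : ℕ → F[X]} {R : F[X]} {n : ℕ}
    (ha : a (n + 1) = R) (ξ : K F) :
    evalK F (tailPoly a R (n + 1)) ξ = -evalK F (tailPoly a R n) ξ := by
  rw [evalK_tailPoly, evalK_tailPoly, ← tailForm_mul_add, qSeq, pSeq, ha]
  simp only [map_add, map_mul]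
  congr 1
  ring

variable {Fq} {a : ℕ → Fq[X]} {R : Fq[X]} {ξ : K Fq}

lemma kabs_evalK_tailPoly_eq {n e : ℕ} (hne : n ≤ e) (hR : ∀ i, n < i → i ≤ e → a i = R) :
    kabs Fq (evalK Fq (tailPoly a R n) ξ) = kabs Fq (evalK Fq (tailPoly a R e) ξ) := by
  induction e, hne using Nat.le_induction with
  | base => rfl
  | succ e hne ih =>
    rw [ih fun i hn he => hR i hn (by lia), evalK_tailPoly_succ (hR (e + 1) (by lia) le_rfl),
      kabs_neg]

lemma IsCFOf.kabs_evalK_tailPoly (h : IsCFOf Fq ξ a) {n e : ℕ} (hne : n ≤ e)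
    (hR : ∀ i, n < i → i ≤ e → a i = R) (hRe : polyAbs Fq R < polyAbs Fq (a (e + 1))) :
    kabs Fq (evalK Fq (tailPoly a R n) ξ) = (polyAbs Fq (qSeq Fq a (e + 1)) ^ 2)⁻¹ := by
  have hq : 0 < polyAbs Fq (qSeq Fq a (e + 1)) := (polyAbs Fq).pos (qSeq_succ_ne_zero h.1 e)
  have hae : 0 < polyAbs Fq (a (e + 1)) := ((polyAbs Fq).nonneg R).trans_lt hRe
  rw [kabs_evalK_tailPoly_eq hne hR, evalK_tailPoly, ← inv_pow, ← h.kabs_mul_sub]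
  refine abv_tailForm_eq_sq (f := seriesAbs Fq) (isNonarchimedean_kabs Fq) ?_ ?_
  · change kabs Fq _ < kabs Fq _
    rw [h.kabs_mul_sub, h.kabs_mul_sub]
    exact inv_strictAnti₀ hq (polyAbs_qSeq_lt h.1 (e + 1))
  · change polyAbs Fq R * kabs Fq _ < kabs Fq _
    rw [h.kabs_mul_sub, h.kabs_mul_sub, polyAbs_qSeq_add_two h.1, mul_inv, ← mul_assoc]
    exact mul_lt_of_lt_one_left (inv_pos.2 hq) ((div_lt_one hae).2 hRe)

lemma IsCFOf.kabs_evalK_derivative_tailPoly (h : IsCFOf Fq ξ a) (hR : R ≠ 0) (n : ℕ) :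
    kabs Fq (evalK Fq (derivative (tailPoly a R n)) ξ) = polyAbs Fq R := by
  set q := fun i => polyToK Fq (qSeq Fq a i) with hq
  set θ := fun i => polyToK Fq (qSeq Fq a i) * ξ - polyToK Fq (pSeq Fq a i) with hθ
  have hderiv : evalK Fq (derivative (tailPoly a R n)) ξ = polyToK Fq R * (q (n + 1) * θ n) +
      (polyToK Fq R * (q n * θ (n + 1)) + 2 * (q n * θ n - q (n + 1) * θ (n + 1))) := by
    simp only [evalK, tailPoly, tailForm, sq, derivative_sub, derivative_add, derivative_mul,
      derivative_C, zero_mul, derivative_X, mul_one, zero_add, sub_zero, eval₂_sub, eval₂_add,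
      eval₂_mul, eval₂_C, eval₂_X, hq, hθ]
    ring
  have hmul (i j : ℕ) : kabs Fq (q i * θ j) =
      polyAbs Fq (qSeq Fq a i) / polyAbs Fq (qSeq Fq a (j + 1)) := by
    rw [kabs_mul, hθ, h.kabs_mul_sub]
    rfl
  have hlt {i j : ℕ} (hij : i ≤ j) : kabs Fq (q i * θ j) < 1 := by
    rw [hmul]
    exact (div_lt_one ((polyAbs Fq).pos (qSeq_succ_ne_zero h.1 j))).2
      (strictMono_nat_of_lt_succ (polyAbs_qSeq_lt h.1) (Nat.lt_succ_of_le hij))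
  have hmain : kabs Fq (polyToK Fq R * (q (n + 1) * θ n)) = polyAbs Fq R := by
    rw [kabs_mul, hmul, div_self ((polyAbs Fq).ne_zero (qSeq_succ_ne_zero h.1 n)), mul_one,
      kabs_polyToK]
  have hsub : kabs Fq (q n * θ n - q (n + 1) * θ (n + 1)) < 1 :=
    (kabs_sub_le _ _).trans_lt (max_lt (hlt le_rfl) (hlt le_rfl))
  rw [hderiv, kabs_add_eq_left, hmain]
  rw [hmain]
  refine (isNonarchimedean_kabs Fq _ _).trans_lt (max_lt ?_ ?_)
  · rw [kabs_mul, kabs_polyToK]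
    exact mul_lt_of_lt_one_right ((polyAbs Fq).pos hR) (hlt n.le_succ)
  · rw [two_mul]
    exact ((isNonarchimedean_kabs Fq _ _).trans_lt (max_lt hsub hsub)).trans_le
      (one_le_polyAbs hR)

lemma Hpoly_C_mul_X_sub_C (A B : Fq[X]) :
    Hpoly Fq (C A * X - C B) = max (polyAbs Fq A) (polyAbs Fq B) := by
  rw [sub_eq_add_neg, ← C_neg, Hpoly_C_mul_X_add_C, (polyAbs Fq).map_neg]

lemma IsCFOf.Hpoly_tailPoly (h : IsCFOf Fq ξ a) (h0 : a 0 = 0) {n : ℕ}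
    (hR : polyAbs Fq (a (n + 1)) < polyAbs Fq R) :
    Hpoly Fq (tailPoly a R (n + 1)) =
      polyAbs Fq R * polyAbs Fq (qSeq Fq a (n + 2)) * polyAbs Fq (qSeq Fq a (n + 1)) := by
  have hlin (i : ℕ) : Hpoly Fq (C (qSeq Fq a (i + 1)) * X - C (pSeq Fq a (i + 1))) =
      polyAbs Fq (qSeq Fq a (i + 1)) := by
    rw [Hpoly_C_mul_X_sub_C, max_eq_left (h.polyAbs_pSeq_le h0 i)]
  have hq : 0 < polyAbs Fq (qSeq Fq a (n + 1)) := (polyAbs Fq).pos (qSeq_succ_ne_zero h.1 n)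
  have hR1 : 1 ≤ polyAbs Fq R := one_le_polyAbs <| (polyAbs Fq).pos_iff.1 <|
    ((polyAbs Fq).nonneg _).trans_lt hR
  have habs := abv_tailForm_eq_mul (f := heightAbs Fq) (isNonarchimedean_Hpoly Fq) (r := C R)
    (x := C (qSeq Fq a (n + 2)) * X - C (pSeq Fq a (n + 2)))
    (y := C (qSeq Fq a (n + 1)) * X - C (pSeq Fq a (n + 1)))
  simp only [heightAbs_apply, hlin, Hpoly_C] at habs
  refine habs ?_ ?_
  · exact (polyAbs_qSeq_lt h.1 (n + 1)).trans_le
      (le_mul_of_one_le_left ((polyAbs Fq).nonneg _) hR1)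
  · rw [polyAbs_qSeq_add_two h.1]
    exact mul_lt_mul_of_pos_right hR hq

end TailPoly

section Liouville

/-- The resultant of the quadratic polynomials `aX² + bX + c` and `a'X² + b'X + c'`. -/
def quadResultant {A : Type*} [CommRing A] (a b c a' b' c' : A) : A :=
  (a * c' - c * a') ^ 2 - (a * b' - b * a') * (b * c' - c * b')

lemma map_quadResultant {A B : Type*} [CommRing A] [CommRing B] (g : A →+* B)
    (a b c a' b' c' : A) : g (quadResultant a b c a' b' c') =
      quadResultant (g a) (g b) (g c) (g a') (g b') (g c') := by
  simp only [quadResultant, map_sub, map_mul, map_pow]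

lemma quadResultant_eq_of_roots {A : Type*} [CommRing A] (a b c a' α β : A) :
    quadResultant a b c a' (-(a' * (α + β))) (a' * (α * β)) =
      a' ^ 2 * ((a * α ^ 2 + b * α + c) * (a * β ^ 2 + b * β + c)) := by
  unfold quadResultant
  ring

-- Bézout: the resultant lies in the ideal generated by the two polynomials.
lemma quadResultant_eq_of_eval {A : Type*} [CommRing A] {a b c a' b' c' t x y : A}
    (hx : x = a * t ^ 2 + b * t + c) (hy : y = a' * t ^ 2 + b' * t + c') :
    quadResultant a b c a' b' c' = (a * c' - c * a') * (a * y - a' * x) -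
      (a * b' - b * a') * (t * (a * y - a' * x) + (b * y - b' * x)) := by
  rw [hx, hy, quadResultant]
  ring

lemma quadResultant_ne_zero {F : Type} [Field F] {P Q : F[X][X]} (hP : Irreducible P)
    (hP0 : P.natDegree ≠ 0) (hP2 : P.natDegree ≤ 2) (hQ : Irreducible Q) (hQ2 : Q.natDegree = 2)
    (hPQ : ¬Associated P Q) :
    quadResultant (P.coeff 2) (P.coeff 1) (P.coeff 0) (Q.coeff 2) (Q.coeff 1) (Q.coeff 0) ≠ 0 := by
  intro h
  obtain ⟨α, β, h1, h0⟩ := exists_vieta_of_natDegree_eq_two hQ2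
  have hα : evalL F Q α = 0 := by
    rw [evalL_eq_of_natDegree_le_two hQ2.le, h1, h0]
    ring
  have hβ : evalL F Q β = 0 := by
    rw [evalL_eq_of_natDegree_le_two hQ2.le, h1, h0]
    ring
  have hne (x : L F) (hx : evalL F Q x = 0) : evalL F P x ≠ 0 := fun hPx =>
    hPQ (associated_of_eval₂_eq_zero phi_injective hP hQ hP0 hPx hx)
  have hlead : φ F (Q.coeff 2) ≠ 0 :=
    (map_ne_zero_iff _ phi_injective).2 (hQ2 ▸ leadingCoeff_ne_zero.2 hQ.ne_zero)
  refine mul_ne_zero (pow_ne_zero 2 hlead) (mul_ne_zero (hne α hα) (hne β hβ)) ?_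
  rw [evalL_eq_of_natDegree_le_two hP2, evalL_eq_of_natDegree_le_two hP2,
    ← quadResultant_eq_of_roots, ← h1, ← h0, ← map_quadResultant, h, map_zero]

variable {Fq}

lemma kabs_sub_mul_le {s t x y : K Fq} {A B : ℝ} (hs : kabs Fq s ≤ A) (ht : kabs Fq t ≤ B) :
    kabs Fq (s * y - t * x) ≤ max (A * kabs Fq y) (B * kabs Fq x) := by
  refine (kabs_sub_le _ _).trans (max_le_max ?_ ?_) <;> rw [kabs_mul]
  · exact mul_le_mul_of_nonneg_right hs (kabs_nonneg y)
  · exact mul_le_mul_of_nonneg_right ht (kabs_nonneg x)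

lemma kabs_sub_mul_le_mul {s t x y : K Fq} {A B : ℝ} (hs : kabs Fq s ≤ A) (ht : kabs Fq t ≤ B)
    (hx : kabs Fq x ≤ A) (hy : kabs Fq y ≤ B) : kabs Fq (s * y - x * t) ≤ A * B := by
  have hA : 0 ≤ A := (kabs_nonneg s).trans hs
  refine (kabs_sub_le _ _).trans (max_le ?_ ?_) <;> rw [kabs_mul]
  · exact mul_le_mul hs hy (kabs_nonneg y) hA
  · exact mul_le_mul hx ht (kabs_nonneg t) hA

lemma one_le_Hpoly_mul_Hpoly_mul_max {P Q : Fq[X][X]} (hP : Irreducible P)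
    (hP0 : P.natDegree ≠ 0) (hP2 : P.natDegree ≤ 2) (hQ : Irreducible Q) (hQ2 : Q.natDegree = 2)
    (hPQ : ¬Associated P Q) {ξ : K Fq} (hξ : kabs Fq ξ ≤ 1) :
    1 ≤ Hpoly Fq P * Hpoly Fq Q *
      max (Hpoly Fq P * kabs Fq (evalK Fq Q ξ)) (Hpoly Fq Q * kabs Fq (evalK Fq P ξ)) := by
  set M := max (Hpoly Fq P * kabs Fq (evalK Fq Q ξ)) (Hpoly Fq Q * kabs Fq (evalK Fq P ξ))
  have hcP (i : ℕ) : kabs Fq (polyToK Fq (P.coeff i)) ≤ Hpoly Fq P := polyAbs_coeff_le_Hpoly P i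
  have hcQ (i : ℕ) : kabs Fq (polyToK Fq (Q.coeff i)) ≤ Hpoly Fq Q := polyAbs_coeff_le_Hpoly Q i
  have hHH : 0 ≤ Hpoly Fq P * Hpoly Fq Q := mul_nonneg (Hpoly_nonneg P) (Hpoly_nonneg Q)
  have hcomb (i : ℕ) : kabs Fq (polyToK Fq (P.coeff i) * evalK Fq Q ξ -
      polyToK Fq (Q.coeff i) * evalK Fq P ξ) ≤ M := kabs_sub_mul_le (hcP i) (hcQ i)
  refine (one_le_polyAbs (quadResultant_ne_zero hP hP0 hP2 hQ hQ2 hPQ)).trans ?_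
  rw [← kabs_polyToK, map_quadResultant,
    quadResultant_eq_of_eval (eval₂_eq_of_natDegree_le_two (polyToK Fq) hP2 ξ)
      (eval₂_eq_of_natDegree_le_two (polyToK Fq) hQ2.le ξ)]
  refine (kabs_sub_le _ _).trans (max_le ?_ ?_) <;> rw [kabs_mul]
  · exact mul_le_mul (kabs_sub_mul_le_mul (hcP 2) (hcQ 2) (hcP 0) (hcQ 0)) (hcomb 2)
      (kabs_nonneg _) hHH
  · refine mul_le_mul (kabs_sub_mul_le_mul (hcP 2) (hcQ 2) (hcP 1) (hcQ 1)) ?_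
      (kabs_nonneg _) hHH
    refine (isNonarchimedean_kabs Fq _ _).trans (max_le ?_ (hcomb 1))
    rw [kabs_mul]
    exact (mul_le_of_le_one_left (kabs_nonneg _) hξ).trans (hcomb 2)

end Liouville

section RealPowers

/-- The real power `q ^ x` of the cardinality `q`, which expresses `|·|` in a logarithmic scale. -/
def qexp (F : Type) [Fintype F] (x : ℝ) : ℝ := (Fintype.card F : ℝ) ^ x

lemma qexp_zero (F : Type) [Fintype F] : qexp F 0 = 1 := Real.rpow_zero _

lemma qexp_natCast {F : Type} [Fintype F] (n : ℕ) : qexp F n = (Fintype.card F : ℝ) ^ n :=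
  Real.rpow_natCast _ n

variable {Fq}

lemma qexp_pos (x : ℝ) : 0 < qexp Fq x := Real.rpow_pos_of_pos (one_pos.trans one_lt_card) x

lemma qexp_add (x y : ℝ) : qexp Fq (x + y) = qexp Fq x * qexp Fq y :=
  Real.rpow_add (one_pos.trans one_lt_card) x y

lemma qexp_rpow (x y : ℝ) : qexp Fq x ^ y = qexp Fq (x * y) :=
  (Real.rpow_mul (one_pos.trans one_lt_card).le x y).symm

lemma qexp_neg (x : ℝ) : qexp Fq (-x) = (qexp Fq x)⁻¹ :=
  Real.rpow_neg (one_pos.trans one_lt_card).le x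

lemma qexp_le_qexp {x y : ℝ} : qexp Fq x ≤ qexp Fq y ↔ x ≤ y :=
  Real.rpow_le_rpow_left_iff one_lt_card

lemma exists_qexp_eq {c : ℝ} (hc : 0 < c) : ∃ x, qexp Fq x = c :=
  ⟨_, Real.rpow_logb (one_pos.trans one_lt_card) one_lt_card.ne' hc⟩

lemma exists_nonneg_qexp_eq {c : ℝ} (hc : 1 ≤ c) : ∃ x, 0 ≤ x ∧ qexp Fq x = c := by
  obtain ⟨x, rfl⟩ := exists_qexp_eq (Fq := Fq) (one_pos.trans_le hc)
  exact ⟨x, qexp_le_qexp.1 ((qexp_zero Fq).trans_le hc), rfl⟩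

end RealPowers

section QuadraticApproximations

variable {Fq}

lemma kabs_evalK_eq_of_associated {P Q : Fq[X][X]} (h : Associated P Q) {ξ : K Fq} :
    kabs Fq (evalK Fq P ξ) = kabs Fq (evalK Fq Q ξ) := by
  obtain ⟨u, rfl⟩ := h
  obtain ⟨r, hr, hu⟩ := Polynomial.isUnit_iff.1 u.isUnit
  have heval : evalK Fq (P * C r) ξ = evalK Fq P ξ * polyToK Fq r := by
    rw [evalK, eval₂_mul, eval₂_C, ← evalK]
  rw [← hu, heval, kabs_mul, kabs_polyToK, polyAbs_of_isUnit hr, mul_one]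

/-- A sequence of irreducible quadratic polynomials `P n` of height `q ^ h n`, with
`|P n(ξ)| = q ^ (-t n)` and `|(P n)'(ξ)| = q ^ k n`, that controls all approximations to `ξ` of
degree at most two: the ratios `t n / h n` lie between `W + 1` and `M`, the heights do not grow too
fast compared with the quality of approximation, and `k n = (1 - δ) h n + o(h n)`. -/
structure IsQuadApproxSeq (ξ : K Fq) (δ W M : ℝ) (P : ℕ → Fq[X][X]) (h t k : ℕ → ℝ) : Prop where
  irreducible : ∀ n, Irreducible (P n)
  natDegree_eq : ∀ n, (P n).natDegree = 2
  Hpoly_eq : ∀ n, Hpoly Fq (P n) = qexp Fq (h n)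
  kabs_evalK_eq : ∀ n, kabs Fq (evalK Fq (P n) ξ) = qexp Fq (-t n)
  kabs_evalK_derivative_eq : ∀ n, kabs Fq (evalK Fq (derivative (P n)) ξ) = qexp Fq (k n)
  kabs_le_one : kabs Fq ξ ≤ 1
  one_le : 1 ≤ W
  natCast_le : ∀ n : ℕ, n ≤ h n
  le_order : ∀ n, (W + 1) * h n ≤ t n
  order_le : ∀ n, t n ≤ M * h n
  height_succ_le : ∀ n, 4 * h (n + 1) ≤ (W - 1) * (t n - h n)
  abs_slope_sub_le : ∀ ε > 0, ∃ B : ℝ, ∀ n, |k n - (1 - δ) * h n| ≤ ε * h n + B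

namespace IsQuadApproxSeq

variable {ξ : K Fq} {δ W M : ℝ} {P : ℕ → Fq[X][X]} {h t k : ℕ → ℝ}

lemma height_nonneg (H : IsQuadApproxSeq ξ δ W M P h t k) (n : ℕ) : 0 ≤ h n :=
  (Nat.cast_nonneg n).trans (H.natCast_le n)

lemma qexp_le_kabs_evalK (H : IsQuadApproxSeq ξ δ W M P h t k) {R : Fq[X][X]}
    (hR : Irreducible R) (hR0 : R.natDegree ≠ 0) (hR2 : R.natDegree ≤ 2) {n : ℕ}
    (hna : ¬Associated R (P n)) {y : ℝ} (hy : qexp Fq y = Hpoly Fq R) (hn : 2 * y < t n - h n) :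
    qexp Fq (-y - 2 * h n) ≤ kabs Fq (evalK Fq R ξ) := by
  have hmax := one_le_Hpoly_mul_Hpoly_mul_max hR hR0 hR2 (H.irreducible n) (H.natDegree_eq n) hna
    H.kabs_le_one
  rw [← hy, H.Hpoly_eq, H.kabs_evalK_eq, mul_max_of_nonneg _ _
    (mul_pos (qexp_pos _) (qexp_pos _)).le] at hmax
  rcases le_max_iff.1 hmax with hsmall | hlarge
  · rw [← qexp_add, ← qexp_add, ← qexp_add, ← qexp_zero Fq, qexp_le_qexp] at hsmall
    linarith
  · rw [← mul_assoc, ← qexp_add, ← qexp_add] at hlarge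
    rw [show -y - 2 * h n = -(y + h n + h n) by ring, qexp_neg]
    exact (inv_le_iff_one_le_mul₀' (qexp_pos _)).2 hlarge

lemma exists_lt_and_height_le (H : IsQuadApproxSeq ξ δ W M P h t k) {y : ℝ} (hy : 0 ≤ y) :
    ∃ n, 2 * y < t n - h n ∧ 2 * h n ≤ 2 * h 0 + (W - 1) * y := by
  have hW := H.one_le
  have hex : ∃ n, 2 * y < t n - h n := by
    obtain ⟨n, hn⟩ := exists_nat_gt (2 * y)
    have := H.natCast_le n
    have := mul_le_mul_of_nonneg_right hW (H.height_nonneg n)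
    exact ⟨n, by linarith [H.le_order n]⟩
  refine ⟨Nat.find hex, Nat.find_spec hex, ?_⟩
  have h0 := H.height_nonneg 0
  rcases hfind : Nat.find hex with _ | m
  · linarith [mul_nonneg (sub_nonneg.2 hW) hy]
  · have hm : t m - h m ≤ 2 * y := not_lt.1 (Nat.find_min hex (by lia))
    linarith [H.height_succ_le m, mul_le_mul_of_nonneg_left hm (sub_nonneg.2 hW)]

lemma exists_mul_rpow_neg_le (H : IsQuadApproxSeq ξ δ W M P h t k) :
    ∃ c > 0, ∀ R : Fq[X][X], Irreducible R → R.natDegree ≠ 0 → R.natDegree ≤ 2 →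
      (∀ n, ¬Associated R (P n)) → c * Hpoly Fq R ^ (-W) ≤ kabs Fq (evalK Fq R ξ) := by
  refine ⟨qexp Fq (-(2 * h 0)), qexp_pos _, fun R hR hR0 hR2 hna => ?_⟩
  obtain ⟨y, hy0, hy⟩ := exists_nonneg_qexp_eq (Fq := Fq) (one_le_Hpoly hR.ne_zero)
  obtain ⟨n, hn, hhn⟩ := H.exists_lt_and_height_le hy0
  refine le_trans ?_ (H.qexp_le_kabs_evalK hR hR0 hR2 (hna n) hy hn)
  rw [← hy, qexp_rpow, ← qexp_add, qexp_le_qexp]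
  linarith

lemma polyBound_of_order_le (H : IsQuadApproxSeq ξ δ W M P h t k) {s B : ℝ} (hWs : W ≤ s)
    (ht : ∀ n, t n ≤ s * h n + B) : PolyBound 2 ξ s := by
  obtain ⟨c, hc, hfar⟩ := H.exists_mul_rpow_neg_le
  refine polyBound_of_irreducible (by linarith [H.one_le]) (lt_min hc (qexp_pos (Fq := Fq) (-B)))
    fun R hR2 hR0 hR _ => ?_
  have hHR := one_le_Hpoly hR.ne_zero
  by_cases hna : ∀ n, ¬Associated R (P n)
  · exact (mul_le_mul (min_le_left _ _) (Real.rpow_le_rpow_of_exponent_le hHR (neg_le_neg hWs))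
      (Real.rpow_nonneg (Hpoly_nonneg R) _) hc.le).trans (hfar R hR hR0 hR2 hna)
  · push Not at hna
    obtain ⟨n, hn⟩ := hna
    refine (mul_le_mul_of_nonneg_right (min_le_right _ _)
      (Real.rpow_nonneg (Hpoly_nonneg R) _)).trans ?_
    rw [Hpoly_eq_of_associated hn, kabs_evalK_eq_of_associated hn, H.Hpoly_eq, H.kabs_evalK_eq,
      qexp_rpow, ← qexp_add, qexp_le_qexp]
    linarith [ht n]

lemma exists_order_le (H : IsQuadApproxSeq ξ δ W M P h t k) {s : ℝ} (hs : PolyBound 2 ξ s) :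
    ∃ B, ∀ n, t n ≤ s * h n + B := by
  obtain ⟨c, hc, hbound⟩ := hs
  obtain ⟨x, rfl⟩ := exists_qexp_eq (Fq := Fq) hc
  refine ⟨-x, fun n => ?_⟩
  have hn := hbound (P n) (H.natDegree_eq n).le
    (kabs_pos.1 ((qexp_pos _).trans_eq (H.kabs_evalK_eq n).symm))
  rw [H.Hpoly_eq, H.kabs_evalK_eq, qexp_rpow, ← qexp_add, qexp_le_qexp] at hn
  linarith

lemma add_one_le_of_order_le (H : IsQuadApproxSeq ξ δ W M P h t k) {s B : ℝ}
    (ht : ∀ n, t n ≤ s * h n + B) : W + 1 ≤ s := by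
  by_contra! hlt
  obtain ⟨n, hn⟩ := exists_nat_gt (B / (W + 1 - s))
  rw [div_lt_iff₀ (by linarith)] at hn
  have := mul_le_mul_of_nonneg_right (H.natCast_le n) (sub_pos.2 hlt).le
  linarith [H.le_order n, ht n]

lemma wExp_ne_top (H : IsQuadApproxSeq ξ δ W M P h t k) : wExp Fq 2 ξ ≠ ⊤ := by
  have ht (n : ℕ) : t n ≤ M * h n + 0 := (H.order_le n).trans_eq (add_zero _).symm
  have hWM : W ≤ M := by linarith [H.add_one_le_of_order_le ht]
  exact ne_top_of_le_ne_top (EReal.coe_ne_top M)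
    (wExp_le_of_polyBound (H.polyBound_of_order_le hWM ht))

variable {v : L Fq → ℝ}

lemma exists_order_le_of_algBound (H : IsQuadApproxSeq ξ δ W M P h t k) (hv : IsAbsExt Fq v)
    {s ε : ℝ} (hs : AlgBound v 2 ξ s) (hε : 0 < ε) :
    ∃ B, ∀ n, t n ≤ (s + δ + ε) * h n + B := by
  obtain ⟨c, hc, hbound⟩ := hs
  obtain ⟨x, rfl⟩ := exists_qexp_eq (Fq := Fq) hc
  obtain ⟨B, hB⟩ := H.abs_slope_sub_le ε hε
  refine ⟨B - x, fun n => ?_⟩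
  obtain ⟨α, D, hα, -, hPξ, hD, -⟩ := exists_nearest_root hv (H.natDegree_eq n) ξ
  rw [H.kabs_evalK_eq] at hPξ
  rw [H.kabs_evalK_derivative_eq] at hD
  have hP0 : (P n).natDegree ≠ 0 := (H.natDegree_eq n).trans_ne two_ne_zero
  have hvα : v (toL Fq ξ - α) ≠ 0 := fun h0 => (qexp_pos (-t n)).ne' (by rw [hPξ, h0, zero_mul])
  have hαξ := hbound α (isAlgElem_of_irreducible (H.irreducible n) hP0 hα)
    ((degAlg_of_irreducible (H.irreducible n) hP0 hα).trans_le (H.natDegree_eq n).le)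
    (sub_ne_zero.1 (hv.abv.ne_zero_iff.1 hvα))
  rw [heightAlg_of_irreducible (H.irreducible n) hP0 hα, H.Hpoly_eq, qexp_rpow, ← qexp_add] at hαξ
  have hle := (mul_le_mul hαξ hD (qexp_pos _).le (hv.nonneg _)).trans_eq hPξ.symm
  rw [← qexp_add, qexp_le_qexp] at hle
  linarith [(abs_le.1 (hB n)).1]

lemma qexp_min_le_of_root (H : IsQuadApproxSeq ξ δ W M P h t k) (hv : IsAbsExt Fq v) {n : ℕ}
    {α : L Fq} (hα : evalL Fq (P n) α = 0) :
    qexp Fq (min (k n - h n) (-t n - k n)) ≤ v (toL Fq ξ - α) := by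
  rcases le_or_gt (qexp Fq (k n - h n)) (v (toL Fq ξ - α)) with hfar | hnear
  · exact (qexp_le_qexp.2 (min_le_left _ _)).trans hfar
  refine (qexp_le_qexp.2 (min_le_right _ _)).trans ?_
  have hlead : polyAbs Fq ((P n).coeff 2) * v (toL Fq ξ - α) ≤ qexp Fq (k n) :=
    calc _ ≤ qexp Fq (h n) * qexp Fq (k n - h n) :=
          mul_le_mul ((polyAbs_coeff_le_Hpoly _ 2).trans_eq (H.Hpoly_eq n)) hnear.le (hv.nonneg _)
            (qexp_pos _).le
      _ = qexp Fq (k n) := by rw [← qexp_add, add_sub_cancel]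
  have hle := (kabs_evalK_le_mul_max hv (H.natDegree_eq n) (ξ := ξ) hα).trans
    (mul_le_mul_of_nonneg_left (max_le (H.kabs_evalK_derivative_eq n).le hlead) (hv.nonneg _))
  rw [H.kabs_evalK_eq, ← sub_add_cancel (-t n) (k n), qexp_add] at hle
  exact le_of_mul_le_mul_right hle (qexp_pos _)

lemma exists_algBound_of_root (H : IsQuadApproxSeq ξ δ W M P h t k) (hv : IsAbsExt Fq v)
    (hδ : δ ≤ 1) {s B ε : ℝ} (ht : ∀ n, t n ≤ s * h n + B) (hε : 0 < ε) :
    ∃ c > 0, ∀ n α, evalL Fq (P n) α = 0 →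
      c * Hpoly Fq (P n) ^ (-(s - δ + ε) - 1) ≤ v (toL Fq ξ - α) := by
  obtain ⟨B', hB'⟩ := H.abs_slope_sub_le ε hε
  refine ⟨qexp Fq (min (-B') (-B - B')), qexp_pos _, fun n α hα => ?_⟩
  refine le_trans ?_ (H.qexp_min_le_of_root hv hα)
  obtain ⟨hlow, hupp⟩ := abs_le.1 (hB' n)
  have := min_le_left (-B') (-B - B')
  have := min_le_right (-B') (-B - B')
  have : 2 * h n ≤ s * h n := mul_le_mul_of_nonneg_right
    (by linarith [H.one_le, H.add_one_le_of_order_le ht]) (H.height_nonneg n)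
  have := mul_le_mul_of_nonneg_right hδ (H.height_nonneg n)
  rw [H.Hpoly_eq, qexp_rpow, ← qexp_add, qexp_le_qexp]
  exact le_min (by linarith [H.height_nonneg n]) (by linarith [ht n])

lemma algBound_of_order_le (H : IsQuadApproxSeq ξ δ W M P h t k) (hv : IsAbsExt Fq v)
    (hδ : δ ≤ 1) {s B ε : ℝ} (ht : ∀ n, t n ≤ s * h n + B) (hε : 0 < ε) :
    AlgBound v 2 ξ (s - δ + ε) := by
  obtain ⟨c₁, hc₁, hroot⟩ := H.exists_algBound_of_root hv hδ ht hε
  obtain ⟨c₂, hc₂, hfar⟩ := H.exists_mul_rpow_neg_le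
  have hW := H.one_le
  have hWs : W ≤ s - δ + ε := by linarith [H.add_one_le_of_order_le ht]
  refine ⟨min c₁ (min c₂ 1), lt_min hc₁ (lt_min hc₂ one_pos), fun α hα hdeg _ => ?_⟩
  obtain ⟨hpos, hirr, -, -, hroot_α⟩ := minPolyPrim_spec hα
  have hHα : 0 < heightAlg Fq α := one_pos.trans_le (one_le_heightAlg hα)
  have hpow := Real.rpow_nonneg hHα.le (-(s - δ + ε) - 1)
  by_cases hna : ∀ n, ¬Associated (minPolyPrim Fq α) (P n)
  · rcases le_or_gt (v (toL Fq ξ - α)) 1 with hle | hgt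
    · have heval : c₂ * heightAlg Fq α ^ (-W) ≤
          v (toL Fq ξ - α) * (heightAlg Fq α * max (kabs Fq ξ) 1 ^ degAlg Fq α) :=
        (hfar _ hirr hpos.ne' hdeg hna).trans (hv.kabs_evalK_le hroot_α hle)
      rw [max_eq_right H.kabs_le_one, one_pow, mul_one, ← div_le_iff₀ hHα, mul_div_assoc,
        ← Real.rpow_sub_one hHα.ne'] at heval
      refine le_trans (mul_le_mul ((min_le_right _ _).trans (min_le_left _ _)) ?_ hpow hc₂.le) heval
      exact Real.rpow_le_rpow_of_exponent_le (one_le_heightAlg hα) (by linarith)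
    · refine (mul_le_one₀ ((min_le_right _ _).trans (min_le_right _ _)) hpow ?_).trans hgt.le
      exact Real.rpow_le_one_of_one_le_of_nonpos (one_le_heightAlg hα) (by linarith)
  · push Not at hna
    obtain ⟨n, hn⟩ := hna
    rw [heightAlg, Hpoly_eq_of_associated hn] at hpow ⊢
    exact (mul_le_mul_of_nonneg_right (min_le_left _ _) hpow).trans
      (hroot n α (eval₂_eq_zero_of_dvd_of_eval₂_eq_zero _ _ hn.dvd hroot_α))

lemma wExp_le_wStarExp_add (H : IsQuadApproxSeq ξ δ W M P h t k) (hv : IsAbsExt Fq v) :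
    wExp Fq 2 ξ ≤ wStarExp Fq v 2 ξ + (δ : EReal) := by
  refine EReal.le_of_forall_lt_iff_le.1 fun r hr => ?_
  have hlt : wStarExp Fq v 2 ξ < ((r - δ : ℝ) : EReal) := by
    rw [EReal.coe_sub]
    exact (EReal.lt_sub_iff_add_lt (Or.inl (EReal.coe_ne_bot _)) (Or.inl (EReal.coe_ne_top _))).2 hr
  obtain ⟨s, hws, hsr⟩ := EReal.lt_iff_exists_real_btwn.1 hlt
  have hε : 0 < r - δ - s := sub_pos.2 (EReal.coe_lt_coe_iff.1 hsr)
  obtain ⟨B, ht⟩ := H.exists_order_le_of_algBound hv (algBound_of_wStarExp_lt hv hws) hε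
  rw [show s + δ + (r - δ - s) = r by ring] at ht
  exact wExp_le_of_polyBound
    (H.polyBound_of_order_le (by linarith [H.add_one_le_of_order_le ht]) ht)

lemma wStarExp_add_le_wExp (H : IsQuadApproxSeq ξ δ W M P h t k) (hv : IsAbsExt Fq v)
    (hδ : δ ≤ 1) : wStarExp Fq v 2 ξ + (δ : EReal) ≤ wExp Fq 2 ξ := by
  refine EReal.le_of_forall_lt_iff_le.1 fun s hs => ?_
  obtain ⟨B, ht⟩ := H.exists_order_le (polyBound_of_wExp_lt hs)
  have hle : wStarExp Fq v 2 ξ ≤ ((s - δ : ℝ) : EReal) := by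
    refine EReal.le_of_forall_lt_iff_le.1 fun r hr => ?_
    have hε : 0 < r - (s - δ) := sub_pos.2 (EReal.coe_lt_coe_iff.1 hr)
    have hbound := H.algBound_of_order_le hv hδ ht hε
    rw [add_sub_cancel] at hbound
    exact wStarExp_le_of_algBound hv hbound
  have hadd := add_le_add_left hle (δ : EReal)
  rwa [← EReal.coe_add, sub_add_cancel] at hadd

end IsQuadApproxSeq

end QuadraticApproximations

section Blocks

/-- The data attached to the start of a block of equal partial quotients `T^k` in
`[0; T^{b 1}, T^{b 2}, …]`: the index `N` of the last partial quotient before the block, the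
degree of the denominator `q_N`, and `b N`. -/
structure BlockState where
  index : ℕ
  deg : ℕ
  last : ℕ

namespace BlockState

/-- The degree of `q_N q_{N-1}`. -/
def base (S : BlockState) : ℕ := 2 * S.deg - S.last

/-- The degree `k` of the partial quotients in the `n`-th block. Up to the summand `n + 2`, which
makes these degrees increase, it is `c` times the degree of `q_N q_{N-1}`. -/
def digit (S : BlockState) (c : ℝ) (n : ℕ) : ℕ := ⌊c * S.base⌋₊ + n + 2

/-- The number of partial quotients in the `n`-th block, chosen so that the block raises the degree
of the denominators by a factor comparable to `J`. -/
def length (S : BlockState) (c : ℝ) (J n : ℕ) : ℕ := J * (S.base / S.digit c n + 1)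

/-- The state at the end of the `n`-th block. -/
def next (S : BlockState) (c : ℝ) (J n : ℕ) : BlockState where
  index := S.index + S.length c J n
  deg := S.deg + S.length c J n * S.digit c n
  last := S.digit c n

/-- The logarithm of the height of the quadratic element obtained by repeating the partial quotients
of the `n`-th block forever. -/
def height (S : BlockState) (c : ℝ) (n : ℕ) : ℕ := S.base + S.digit c n

/-- Minus the logarithm of the value at the continued fraction of the minimal polynomial of the
quadratic element obtained by repeating the partial quotients of the `n`-th block forever. -/
def order (S : BlockState) (c : ℝ) (J n : ℕ) : ℕ := 2 * (S.next c J n).deg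

variable (S : BlockState) (c : ℝ) (J n : ℕ)

lemma add_two_le_digit : n + 2 ≤ S.digit c n := by
  unfold digit
  lia

lemma digit_le_height : S.digit c n ≤ S.height c n := Nat.le_add_left _ _

lemma length_mul_digit_eq :
    S.length c J n * S.digit c n = J * (S.base / S.digit c n * S.digit c n + S.digit c n) := by
  unfold length
  ring

lemma mul_base_le_length_mul_digit : J * S.base ≤ S.length c J n * S.digit c n := by
  rw [length_mul_digit_eq]
  refine Nat.mul_le_mul_left J ?_
  have := S.add_two_le_digit c n
  exact (Nat.lt_div_mul_add (by lia)).le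

lemma mul_digit_le_length_mul_digit : J * S.digit c n ≤ S.length c J n * S.digit c n := by
  rw [length_mul_digit_eq]
  exact Nat.mul_le_mul_left J (Nat.le_add_left _ _)

lemma length_mul_digit_le : S.length c J n * S.digit c n ≤ J * S.height c n := by
  rw [length_mul_digit_eq]
  exact Nat.mul_le_mul_left J (Nat.add_le_add_right (Nat.div_mul_le_self _ _) _)

lemma mul_height_le_order : J * S.height c n ≤ S.order c J n := by
  have h₁ := S.mul_base_le_length_mul_digit c J n
  have h₂ := S.mul_digit_le_length_mul_digit c J n
  have h₃ : J * S.height c n = J * S.base + J * S.digit c n := mul_add _ _ _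
  simp only [order, next]
  lia

lemma order_le_mul_height {S : BlockState} {c : ℝ} {n : ℕ} (hlast : S.last ≤ S.digit c n) :
    S.order c J n ≤ (2 * J + 1) * S.height c n := by
  have := S.length_mul_digit_le c J n
  have : (2 * J + 1) * S.height c n = 2 * (J * S.height c n) + S.height c n := by ring
  have : 2 * S.deg ≤ S.height c n := by
    unfold height base
    lia
  simp only [order, next]
  lia

variable {J} in
lemma base_next_add_digit (hJ : 1 ≤ J) :
    (S.next c J n).base + S.digit c n = S.order c J n := by
  have h := S.mul_digit_le_length_mul_digit c J n
  have := Nat.le_mul_of_pos_left (S.digit c n) hJ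
  simp only [base, order, next] at h ⊢
  lia

variable {J} in
lemma base_le_base_next (hJ : 1 ≤ J) : S.base ≤ (S.next c J n).base := by
  have h₁ := S.mul_height_le_order c J n
  have h₂ := S.base_next_add_digit c n hJ
  have := Nat.le_mul_of_pos_left (S.height c n) hJ
  unfold height at *
  lia

variable {c J} in
lemma digit_lt_digit_next (hc : 0 ≤ c) (hJ : 1 ≤ J) :
    S.digit c n < (S.next c J n).digit c (n + 1) := by
  have hfloor : ⌊c * S.base⌋₊ ≤ ⌊c * (S.next c J n).base⌋₊ :=
    Nat.floor_mono (mul_le_mul_of_nonneg_left (mod_cast S.base_le_base_next c n hJ) hc)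
  unfold digit at *
  lia

variable {c J} in
lemma order_le_height_next (hc : 0 ≤ c) (hJ : 1 ≤ J) :
    S.order c J n ≤ (S.next c J n).height c (n + 1) := by
  rw [← S.base_next_add_digit c n hJ]
  exact Nat.add_le_add_left (S.digit_lt_digit_next n hc hJ).le _

lemma mul_base_le_digit : c * S.base ≤ S.digit c n := by
  have := (Nat.lt_floor_add_one (c * S.base)).le
  unfold digit
  push_cast
  linarith [(Nat.cast_nonneg n : (0 : ℝ) ≤ n)]

variable {c} in
lemma digit_le_mul_base_add (hc : 0 ≤ c) : (S.digit c n : ℝ) ≤ c * S.base + n + 2 := by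
  have := Nat.floor_le (mul_nonneg hc (Nat.cast_nonneg S.base))
  unfold digit
  push_cast
  linarith

variable {c J} in
lemma height_next_le (hc : 0 ≤ c) (hJ : 1 ≤ J) :
    ((S.next c J n).height c (n + 1) : ℝ) ≤ (2 + c) * S.order c J n := by
  have hbase : ((S.next c J n).base : ℝ) + S.digit c n = S.order c J n :=
    mod_cast S.base_next_add_digit c n hJ
  have hdigit := (S.next c J n).digit_le_mul_base_add (n + 1) hc
  have hk : (n : ℝ) + 2 ≤ S.digit c n := mod_cast S.add_two_le_digit c n
  have : (0 : ℝ) ≤ (S.next c J n).base := Nat.cast_nonneg _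
  have := mul_le_mul_of_nonneg_left (show (0 : ℝ) ≤ S.digit c n by linarith) hc
  unfold height
  push_cast at hdigit ⊢
  rw [← hbase]
  linarith

variable {c J} in
lemma four_mul_height_next_le (hc : 0 ≤ c) (hJ : 2 ≤ J) :
    4 * ((S.next c J n).height c (n + 1) : ℝ) ≤
      16 * (1 + c) * (S.order c J n - S.height c n) := by
  have hnext := S.height_next_le n hc (one_le_two.trans hJ)
  have hhalf : 2 * (S.height c n : ℝ) ≤ S.order c J n :=
    mod_cast (Nat.mul_le_mul_right _ hJ).trans (S.mul_height_le_order c J n)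
  have hmul := mul_le_mul_of_nonneg_left hhalf (by linarith : 0 ≤ 1 + c)
  have := mul_nonneg hc (Nat.cast_nonneg (α := ℝ) (S.order c J n))
  linarith

end BlockState

/-- The state at the start of the `n`-th block of the continued fraction with parameters `c`, `J`.
The first partial quotient, of degree one, precedes all blocks. -/
def blockState (c : ℝ) (J : ℕ) : ℕ → BlockState
  | 0 => ⟨1, 1, 1⟩
  | n + 1 => (blockState c J n).next c J n

variable {c : ℝ} {J : ℕ}

lemma last_blockState_lt_digit (hc : 0 ≤ c) (hJ : 1 ≤ J) (n : ℕ) :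
    (blockState c J n).last < (blockState c J n).digit c n := by
  cases n with
  | zero => exact (blockState c J 0).add_two_le_digit c 0
  | succ n => exact (blockState c J n).digit_lt_digit_next n hc hJ

lemma sq_le_height_blockState (hc : 0 ≤ c) (hJ : 4 ≤ J) (n : ℕ) :
    (n + 1) ^ 2 ≤ (blockState c J n).height c n := by
  induction n with
  | zero =>
    have h := (blockState c J 0).add_two_le_digit c 0
    have := (blockState c J 0).digit_le_height c 0
    lia
  | succ n ih =>
    calc (n + 1 + 1) ^ 2 ≤ (2 * (n + 1)) ^ 2 := Nat.pow_le_pow_left (by lia) 2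
      _ = 4 * (n + 1) ^ 2 := by ring
      _ ≤ J * (blockState c J n).height c n := Nat.mul_le_mul hJ ih
      _ ≤ (blockState c J n).order c J n := BlockState.mul_height_le_order _ _ _ _
      _ ≤ _ := (blockState c J n).order_le_height_next n hc (by lia)

lemma abs_digit_sub_le {δ : ℝ} (h0 : 0 < δ) (h1 : δ ≤ 1) (hJ : 4 ≤ J) {ε : ℝ} (hε : 0 < ε)
    (n : ℕ) :
    |((blockState (1 / δ - 1) J n).digit (1 / δ - 1) n : ℝ) -
      (1 - δ) * (blockState (1 / δ - 1) J n).height (1 / δ - 1) n| ≤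
      ε * (blockState (1 / δ - 1) J n).height (1 / δ - 1) n + (1 / ε + 1) := by
  have hc : 0 ≤ 1 / δ - 1 := sub_nonneg.2 ((one_le_div h0).2 h1)
  set c := 1 / δ - 1 with hcδ
  set S := blockState c J n
  have hsq : ((n : ℝ) + 1) ^ 2 ≤ S.height c n := mod_cast sq_le_height_blockState hc hJ n
  have hlow := S.mul_base_le_digit c n
  have hupp := S.digit_le_mul_base_add n hc
  have hdiff : (S.digit c n : ℝ) - (1 - δ) * S.height c n =
      δ * (S.digit c n - c * S.base) := by
    simp only [BlockState.height, hcδ]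
    push_cast
    field_simp
    ring
  have hamgm : (n : ℝ) + 1 ≤ ε * (n + 1) ^ 2 + 1 / ε := by
    have : 0 ≤ ε * (n + 1 - 1 / ε) ^ 2 := by positivity
    have : ε * ((n : ℝ) + 1 - 1 / ε) ^ 2 = ε * (n + 1) ^ 2 + 1 / ε - 2 * (n + 1) := by
      field_simp
      ring
    linarith [(Nat.cast_nonneg n : (0 : ℝ) ≤ n)]
  rw [hdiff, abs_of_nonneg (mul_nonneg h0.le (by linarith))]
  calc δ * (S.digit c n - c * S.base) ≤ S.digit c n - c * S.base :=
        mul_le_of_le_one_left (by linarith) h1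
    _ ≤ ε * (n + 1) ^ 2 + 1 / ε + 1 := by linarith
    _ ≤ ε * S.height c n + (1 / ε + 1) := by
      linarith [mul_le_mul_of_nonneg_left hsq hε.le]

end Blocks

section BlockContinuedFraction

lemma sInf_setOf_le_eq_succ {f : ℕ → ℕ} (hf : Monotone f) {n i : ℕ} (h₁ : f n < i)
    (h₂ : i ≤ f (n + 1)) : sInf {m | i ≤ f m} = n + 1 := by
  refine le_antisymm (Nat.sInf_le h₂) (le_csInf ⟨n + 1, h₂⟩ fun m hm => ?_)
  by_contra! hmn
  exact (h₁.trans_le hm).not_ge (hf (Nat.le_of_lt_succ hmn))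

/-- The degree `b i` of the `i`-th partial quotient, which is constant on each block; `b i = 1` for
`i ≤ 1`. -/
def blockDigit (c : ℝ) (J i : ℕ) : ℕ :=
  (blockState c J (sInf {n | i ≤ (blockState c J n).index})).last

/-- The partial quotients of `[0; T^{b 1}, T^{b 2}, …]`, where `b` is `blockDigit c J`. -/
def blockQuotient (F : Type) [Field F] (c : ℝ) (J i : ℕ) : F[X] :=
  if i = 0 then 0 else X ^ blockDigit c J i

variable {c : ℝ} {J : ℕ}

lemma index_blockState_strictMono (hJ : 1 ≤ J) : StrictMono fun n => (blockState c J n).index :=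
  strictMono_nat_of_lt_succ fun _ => Nat.lt_add_of_pos_right (Nat.mul_pos hJ (Nat.succ_pos _))

lemma one_le_last_blockState (n : ℕ) : 1 ≤ (blockState c J n).last := by
  cases n with
  | zero => rfl
  | succ n => exact (Nat.le_add_left 1 _).trans ((blockState c J n).add_two_le_digit c n)

lemma blockDigit_eq_digit (hJ : 1 ≤ J) {n i : ℕ} (h₁ : (blockState c J n).index < i)
    (h₂ : i ≤ (blockState c J (n + 1)).index) :
    blockDigit c J i = (blockState c J n).digit c n := by
  rw [blockDigit, sInf_setOf_le_eq_succ (index_blockState_strictMono hJ).monotone h₁ h₂]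
  rfl

lemma blockDigit_index (hJ : 1 ≤ J) (n : ℕ) :
    blockDigit c J (blockState c J n).index = (blockState c J n).last := by
  cases n with
  | zero =>
    have hzero : sInf {n | (blockState c J 0).index ≤ (blockState c J n).index} = 0 :=
      Nat.sInf_eq_zero.2 (Or.inl (show (blockState c J 0).index ≤ _ from le_rfl))
    rw [blockDigit, hzero]
  | succ n => exact blockDigit_eq_digit hJ (index_blockState_strictMono hJ n.lt_succ_self) le_rfl

lemma exists_index_blockState_eq_succ (hJ : 1 ≤ J) (n : ℕ) :
    ∃ m, (blockState c J n).index = m + 1 :=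
  Nat.exists_eq_add_one.2
    (one_pos.trans_le ((index_blockState_strictMono hJ).monotone (Nat.zero_le n)))

section Field

variable (F : Type) [Field F]

lemma blockQuotient_of_ne_zero {i : ℕ} (hi : i ≠ 0) :
    blockQuotient F c J i = X ^ blockDigit c J i := if_neg hi

lemma one_le_natDegree_blockQuotient (i : ℕ) (hi : 1 ≤ i) :
    1 ≤ (blockQuotient F c J i).natDegree := by
  rw [blockQuotient_of_ne_zero F (by lia), natDegree_X_pow]
  exact one_le_last_blockState _

lemma blockQuotient_eq_X_pow (hJ : 1 ≤ J) {n i : ℕ} (h₁ : (blockState c J n).index < i)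
    (h₂ : i ≤ (blockState c J (n + 1)).index) :
    blockQuotient F c J i = X ^ (blockState c J n).digit c n := by
  rw [blockQuotient_of_ne_zero F (by lia), blockDigit_eq_digit hJ h₁ h₂]

lemma natDegree_qSeq_add {a : ℕ → F[X]} (ha : ∀ n, 1 ≤ n → 1 ≤ (a n).natDegree) {N d l : ℕ}
    (hd : ∀ i, N < i → i ≤ N + l → (a i).natDegree = d) :
    (qSeq F a (N + l + 1)).natDegree = (qSeq F a (N + 1)).natDegree + l * d := by
  induction l with
  | zero => simp
  | succ l ih =>
    rw [← add_assoc, natDegree_qSeq_add_two ha, hd (N + l + 1) (by lia) (by lia),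
      ih fun i h₁ h₂ => hd i h₁ (by lia)]
    ring

lemma natDegree_qSeq_blockQuotient (hJ : 1 ≤ J) (n : ℕ) :
    (qSeq F (blockQuotient F c J) ((blockState c J n).index + 1)).natDegree =
      (blockState c J n).deg := by
  have ha := one_le_natDegree_blockQuotient F (c := c) (J := J)
  induction n with
  | zero =>
    have hone : blockDigit c J 1 = 1 := blockDigit_index hJ 0
    rw [blockState, natDegree_qSeq_add_two ha, zero_add, blockQuotient_of_ne_zero F one_ne_zero,
      hone]
    simp [qSeq]
  | succ n ih =>
    rw [blockState, BlockState.next, ← ih]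
    exact natDegree_qSeq_add F ha fun i h₁ h₂ => by
      rw [blockQuotient_eq_X_pow F hJ h₁ h₂, natDegree_X_pow]

lemma natDegree_qSeq_index_add (hJ : 1 ≤ J) (n : ℕ) :
    (qSeq F (blockQuotient F c J) (blockState c J n).index).natDegree + (blockState c J n).last =
      (blockState c J n).deg := by
  obtain ⟨m, hm⟩ := exists_index_blockState_eq_succ (c := c) hJ n
  have hstep := natDegree_qSeq_add_two (one_le_natDegree_blockQuotient F (c := c) (J := J)) m
  rw [← natDegree_qSeq_blockQuotient F hJ n, ← blockDigit_index hJ n, hm, hstep,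
    blockQuotient_of_ne_zero F m.succ_ne_zero, natDegree_X_pow, add_comm]

/-- The minimal polynomial of the quadratic element obtained by repeating the partial quotients of
the `n`-th block forever. -/
def blockPoly (c : ℝ) (J n : ℕ) : F[X][X] :=
  tailPoly (blockQuotient F c J) (X ^ (blockState c J n).digit c n) (blockState c J n).index

lemma natDegree_X_pow_digit_ne_zero (S : BlockState) (c : ℝ) (n : ℕ) :
    (X ^ S.digit c n : F[X]).natDegree ≠ 0 := by
  rw [natDegree_X_pow]
  have := S.add_two_le_digit c n
  lia

lemma irreducible_blockPoly (c : ℝ) (J n : ℕ) : Irreducible (blockPoly F c J n) :=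
  irreducible_tailPoly _ (natDegree_X_pow_digit_ne_zero F _ c n) _

lemma natDegree_blockPoly (c : ℝ) (J n : ℕ) : (blockPoly F c J n).natDegree = 2 :=
  natDegree_tailPoly _ (natDegree_X_pow_digit_ne_zero F _ c n) _

end Field

variable {Fq} {ξ : K Fq}

lemma polyAbs_qSeq_blockQuotient (i : ℕ) :
    polyAbs Fq (qSeq Fq (blockQuotient Fq c J) (i + 1)) =
      (Fintype.card Fq : ℝ) ^ (qSeq Fq (blockQuotient Fq c J) (i + 1)).natDegree :=
  polyAbs_of_ne_zero (qSeq_succ_ne_zero (one_le_natDegree_blockQuotient Fq) i)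

lemma Hpoly_blockPoly (hc : 0 ≤ c) (hJ : 1 ≤ J) (hξ : IsCFOf Fq ξ (blockQuotient Fq c J)) (n : ℕ) :
    Hpoly Fq (blockPoly Fq c J n) = qexp Fq ((blockState c J n).height c n) := by
  have hlast := last_blockState_lt_digit hc hJ n
  have hdeg := natDegree_qSeq_blockQuotient Fq (c := c) hJ n
  have hdeg' := natDegree_qSeq_index_add Fq (c := c) hJ n
  have hindex := blockDigit_index (c := c) hJ n
  obtain ⟨m, hm⟩ := exists_index_blockState_eq_succ (c := c) hJ n
  rw [hm] at hdeg hdeg' hindex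
  have hR : polyAbs Fq (blockQuotient Fq c J (m + 1)) <
      polyAbs Fq (X ^ (blockState c J n).digit c n) := by
    rw [blockQuotient_of_ne_zero Fq m.succ_ne_zero, polyAbs_X_pow, polyAbs_X_pow, hindex]
    exact pow_lt_pow_right₀ one_lt_card hlast
  rw [blockPoly, hm, hξ.Hpoly_tailPoly (if_pos rfl) hR, polyAbs_X_pow, polyAbs_qSeq_blockQuotient,
    polyAbs_qSeq_blockQuotient, qexp_natCast, ← pow_add, ← pow_add]
  congr 1
  unfold BlockState.height BlockState.base
  lia

lemma kabs_evalK_blockPoly (hc : 0 ≤ c) (hJ : 1 ≤ J) (hξ : IsCFOf Fq ξ (blockQuotient Fq c J))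
    (n : ℕ) : kabs Fq (evalK Fq (blockPoly Fq c J n) ξ) =
      qexp Fq (-((blockState c J n).order c J n : ℝ)) := by
  have hlt := index_blockState_strictMono (c := c) hJ
  have hR : polyAbs Fq (X ^ (blockState c J n).digit c n) <
      polyAbs Fq (blockQuotient Fq c J ((blockState c J (n + 1)).index + 1)) := by
    rw [blockQuotient_eq_X_pow Fq hJ (Nat.lt_succ_self _) (hlt (n + 1).lt_succ_self),
      polyAbs_X_pow, polyAbs_X_pow]
    exact pow_lt_pow_right₀ one_lt_card (last_blockState_lt_digit hc hJ (n + 1))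
  rw [blockPoly, hξ.kabs_evalK_tailPoly (hlt n.lt_succ_self).le
    (fun _ h₁ h₂ => blockQuotient_eq_X_pow Fq hJ h₁ h₂) hR, polyAbs_qSeq_blockQuotient,
    natDegree_qSeq_blockQuotient Fq hJ, ← pow_mul, qexp_neg, qexp_natCast, mul_comm]
  rfl

lemma kabs_evalK_derivative_blockPoly (hξ : IsCFOf Fq ξ (blockQuotient Fq c J)) (n : ℕ) :
    kabs Fq (evalK Fq (derivative (blockPoly Fq c J n)) ξ) =
      qexp Fq ((blockState c J n).digit c n) := by
  rw [blockPoly, hξ.kabs_evalK_derivative_tailPoly (pow_ne_zero _ X_ne_zero), polyAbs_X_pow,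
    qexp_natCast]

lemma isQuadApproxSeq_blockPoly {δ : ℝ} (h0 : 0 < δ) (h1 : δ ≤ 1) (hJ : 2 + 16 / δ ≤ J)
    (hξ : IsCFOf Fq ξ (blockQuotient Fq (1 / δ - 1) J)) :
    IsQuadApproxSeq ξ δ (1 + 16 / δ) (2 * J + 1) (blockPoly Fq (1 / δ - 1) J)
      (fun n => (blockState (1 / δ - 1) J n).height (1 / δ - 1) n)
      (fun n => (blockState (1 / δ - 1) J n).order (1 / δ - 1) J n)
      (fun n => (blockState (1 / δ - 1) J n).digit (1 / δ - 1) n) := by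
  have hδ : 1 ≤ 1 / δ := (one_le_div h0).2 h1
  have h16 : 16 / δ = 16 * (1 / δ) := by ring
  have hJ4 : 4 ≤ J := by
    have : (4 : ℝ) ≤ J := by linarith
    exact_mod_cast this
  have hJ1 : 1 ≤ J := by lia
  set c := 1 / δ - 1
  have hc : 0 ≤ c := sub_nonneg.2 hδ
  set S := blockState c J
  have hheight (n : ℕ) : (0 : ℝ) ≤ (S n).height c n := Nat.cast_nonneg _
  have horder (n : ℕ) : (J : ℝ) * (S n).height c n ≤ (S n).order c J n :=
    mod_cast (S n).mul_height_le_order c J n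
  have hle (n : ℕ) : (1 + 16 / δ + 1) * (S n).height c n ≤ (S n).order c J n :=
    (mul_le_mul_of_nonneg_right (by linarith) (hheight n)).trans (horder n)
  exact
    { irreducible := irreducible_blockPoly Fq c J
      natDegree_eq := natDegree_blockPoly Fq c J
      Hpoly_eq := Hpoly_blockPoly hc hJ1 hξ
      kabs_evalK_eq := kabs_evalK_blockPoly hc hJ1 hξ
      kabs_evalK_derivative_eq := kabs_evalK_derivative_blockPoly hξ
      kabs_le_one := hξ.kabs_le_one (if_pos rfl)
      one_le := by linarith
      natCast_le := fun n => Nat.cast_le.2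
        (by linarith [(S n).add_two_le_digit c n, (S n).digit_le_height c n])
      le_order := hle
      order_le := fun n => mod_cast
        BlockState.order_le_mul_height J (last_blockState_lt_digit hc hJ1 n).le
      height_succ_le := fun n => by
        rw [show 1 + 16 / δ - 1 = 16 * (1 + c) by simp only [c]; ring]
        exact (S n).four_mul_height_next_le n hc (by lia)
      abs_slope_sub_le := fun ε hε => ⟨1 / ε + 1, abs_digit_sub_le h0 h1 hJ4 hε⟩ }

variable (Fq) in
lemma exists_isQuadApproxSeq {δ : ℝ} (h0 : 0 < δ) (h1 : δ ≤ 1) :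
    ∃ (ξ : K Fq) (W M : ℝ) (P : ℕ → Fq[X][X]) (h t k : ℕ → ℝ), IsQuadApproxSeq ξ δ W M P h t k := by
  obtain ⟨J, hJ⟩ := exists_nat_ge (2 + 16 / δ)
  obtain ⟨ξ, hξ⟩ := exists_isCFOf (one_le_natDegree_blockQuotient Fq (c := 1 / δ - 1) (J := J))
  exact ⟨ξ, _, _, _, _, _, _, isQuadApproxSeq_blockPoly h0 h1 hJ hξ⟩

end BlockContinuedFraction

theorem stmt2_general (Fq : Type) [Field Fq] [Fintype Fq]
    (v : L Fq → ℝ) (hv : IsAbsExt Fq v) :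
    (∀ ξ : K Fq,
      wStarExp Fq v 2 ξ ≤ wExp Fq 2 ξ ∧ wExp Fq 2 ξ ≤ wStarExp Fq v 2 ξ + 1) ∧
    (∀ δ : ℝ, 0 ≤ δ → δ ≤ 1 → ∃ ξ : K Fq,
      wExp Fq 2 ξ ≠ ⊤ ∧ wStarExp Fq v 2 ξ ≠ ⊤ ∧
      wExp Fq 2 ξ = wStarExp Fq v 2 ξ + ((δ : ℝ) : EReal)) := by
  refine ⟨fun ξ => ⟨wStarExp_le_wExp hv 2 ξ, wExp_two_le_wStarExp_two_add_one hv ξ⟩,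
    fun δ hδ hδ1 => ?_⟩
  rcases hδ.eq_or_lt with rfl | hδ
  · obtain ⟨hw, hstar⟩ := wExp_zero hv one_le_two
    exact ⟨0, by simp [hw], by simp [hstar], by simp [hw, hstar]⟩
  · obtain ⟨ξ, W, M, P, h, t, k, H⟩ := exists_isQuadApproxSeq Fq hδ hδ1
    exact ⟨ξ, H.wExp_ne_top, ne_top_of_le_ne_top H.wExp_ne_top (wStarExp_le_wExp hv 2 ξ),
      (H.wExp_le_wStarExp_add hv).antisymm (H.wStarExp_add_le_wExp hv hδ1)⟩

theorem stmt2 (Fq : Type) [Field Fq] [Fintype Fq]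
    (v : L Fq → ℝ) (hv : IsAbsExt Fq v) :
    (∀ ξ : K Fq, wExp Fq 2 ξ ≠ ⊤ →
      wStarExp Fq v 2 ξ ≤ wExp Fq 2 ξ ∧ wExp Fq 2 ξ ≤ wStarExp Fq v 2 ξ + 1) ∧
    (∀ δ : ℝ, 0 ≤ δ → δ ≤ 1 → ∃ ξ : K Fq,
      wExp Fq 2 ξ ≠ ⊤ ∧ wStarExp Fq v 2 ξ ≠ ⊤ ∧
      wExp Fq 2 ξ = wStarExp Fq v 2 ξ + ((δ : ℝ) : EReal)) :=
  ⟨fun ξ _ => (stmt2_general Fq v hv).1 ξ, (stmt2_general Fq v hv).2⟩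

end Ooto
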